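/- arXiv:2506.23970 — 4 statements merged into one kernel-verified Lean document; each statement's English description precedes it below -/
import Mathlib

section
/- For every c ∈ (0,1/2] there exists a constant C = C(c) > 1 such that for every function p = p(n) ∈ [C·(log n)/n, 1], the probability that the random graph G ~ G(n, p(n)) contains a vertex set S with 1 ≤ |S| ≤ ⌈c/p(n)⌉ and |N(S)| < |S|·(n-|S|)·p(n)/2 is o(n^{-2}) as n → ∞. -/
open Filter Asymptotics

open Classical in
/-- Probability that the Erdős–Rényi random graph `G(n,p)` satisfies the property `A`:
each graph `G` on `[n]` receives probability `p^{e(G)} (1-p)^{C(n,2)-e(G)}`. -/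
noncomputable def erProb (n : ℕ) (p : ℝ) (A : SimpleGraph (Fin n) → Prop) : ℝ :=
  ∑ G : SimpleGraph (Fin n),
    if A G then p ^ (Nat.card G.edgeSet) * (1 - p) ^ (n.choose 2 - Nat.card G.edgeSet)
    else 0

noncomputable def erW (n : ℕ) (p : ℝ) (G : SimpleGraph (Fin n)) : ℝ :=
  p ^ (Nat.card G.edgeSet) * (1 - p) ^ (n.choose 2 - Nat.card G.edgeSet)

lemma erW_nonneg {n : ℕ} {p : ℝ} (h0 : 0 ≤ p) (h1 : p ≤ 1) (G : SimpleGraph (Fin n)) :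
    0 ≤ erW n p G := by
  unfold erW
  have : 0 ≤ 1 - p := by linarith
  positivity

open Classical in
lemma erProb_noedge (n : ℕ) (p : ℝ) (S A : Finset (Fin n)) (hSA : Disjoint S A) :
    ∑ G : SimpleGraph (Fin n), (if ∀ v ∈ S, ∀ w ∈ A, ¬ G.Adj v w then erW n p G else 0)
      = (1 - p) ^ (S.card * A.card) := by
  set F : Finset (Sym2 (Fin n)) := (S ×ˢ A).image (fun x => s(x.1, x.2)) with hF
  have hFcard : F.card = S.card * A.card := by
    rw [hF, Finset.card_image_of_injOn, Finset.card_product]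
    rintro ⟨a, b⟩ h ⟨c, d⟩ h' he
    simp only [Finset.coe_product, Set.mem_prod, Finset.mem_coe] at h h'
    simp only [Sym2.eq_iff] at he
    rcases he with ⟨rfl, rfl⟩ | ⟨rfl, rfl⟩
    · rfl
    · exact absurd h'.2 (Finset.disjoint_left.mp hSA h.1)
  set E : Finset (Sym2 (Fin n)) := (⊤ : SimpleGraph (Fin n)).edgeFinset with hE
  have hEcard : E.card = n.choose 2 := by
    rw [hE, SimpleGraph.card_edgeFinset_top_eq_card_choose_two, Fintype.card_fin]
  have hFE : F ⊆ E := by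
    intro e he
    simp only [hF, Finset.mem_image, Finset.mem_product] at he
    obtain ⟨⟨a, b⟩, ⟨ha, hb⟩, rfl⟩ := he
    simp only [hE, SimpleGraph.mem_edgeFinset, SimpleGraph.mem_edgeSet, SimpleGraph.top_adj]
    rintro rfl
    exact Finset.disjoint_left.mp hSA ha hb
  have hEFcard : (E \ F).card = n.choose 2 - F.card := by
    rw [Finset.card_sdiff_of_subset hFE, hEcard]
  have hle : F.card ≤ n.choose 2 := hEcard ▸ Finset.card_le_card hFE
  have key := Finset.sum_pow_mul_eq_add_pow p (1 - p) (E \ F)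
  rw [← Finset.sum_filter]
  have : ∑ G ∈ Finset.univ.filter (fun G : SimpleGraph (Fin n) => ∀ v ∈ S, ∀ w ∈ A, ¬ G.Adj v w),
      erW n p G = ∑ T ∈ (E \ F).powerset,
        (p ^ T.card * (1 - p) ^ ((E \ F).card - T.card)) * (1 - p) ^ F.card := by
    refine Finset.sum_bij' (fun G _ => G.edgeFinset)
      (fun T _ => SimpleGraph.fromEdgeSet (T : Set (Sym2 (Fin n)))) ?_ ?_ ?_ ?_ ?_
    · intro G hG
      simp only [Finset.mem_filter, Finset.mem_univ, true_and] at hG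
      rw [Finset.mem_powerset]
      intro e he
      rw [Finset.mem_sdiff]
      refine ⟨SimpleGraph.edgeFinset_mono le_top he, ?_⟩
      intro heF
      simp only [hF, Finset.mem_image, Finset.mem_product] at heF
      obtain ⟨⟨a, b⟩, ⟨ha, hb⟩, rfl⟩ := heF
      exact hG a ha b hb (by simpa using he)
    · intro T hT
      simp only [Finset.mem_filter, Finset.mem_univ, true_and]
      intro v hv w hw h
      rw [SimpleGraph.fromEdgeSet_adj] at h
      have := Finset.mem_powerset.mp hT (Finset.mem_coe.mp h.1)
      rw [Finset.mem_sdiff] at this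
      apply this.2
      simp only [hF, Finset.mem_image, Finset.mem_product]
      exact ⟨(v, w), ⟨hv, hw⟩, rfl⟩
    · intro G _
      simp
    · intro T hT
      ext e
      simp only [SimpleGraph.mem_edgeFinset, SimpleGraph.edgeSet_fromEdgeSet]
      constructor
      · intro h; exact Finset.mem_coe.mp h.1
      · intro h
        refine ⟨h, ?_⟩
        have := (Finset.mem_sdiff.mp (Finset.mem_powerset.mp hT h)).1
        rw [hE, SimpleGraph.mem_edgeFinset] at this
        exact SimpleGraph.not_isDiag_of_mem_edgeSet _ this
    · intro G hG
      simp only [Finset.mem_filter, Finset.mem_univ, true_and] at hG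
      have hc : Nat.card G.edgeSet = G.edgeFinset.card := by
        rw [Nat.card_eq_fintype_card, SimpleGraph.edgeFinset_card]
      have hsub : G.edgeFinset.card ≤ (E \ F).card := by
        apply Finset.card_le_card
        intro e he
        rw [Finset.mem_sdiff]
        refine ⟨SimpleGraph.edgeFinset_mono le_top he, ?_⟩
        intro heF
        simp only [hF, Finset.mem_image, Finset.mem_product] at heF
        obtain ⟨⟨a, b⟩, ⟨ha, hb⟩, rfl⟩ := heF
        exact hG a ha b hb (by simpa using he)
      unfold erW
      rw [hc, mul_assoc, ← pow_add]
      congr 2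
      omega
  rw [this, ← Finset.sum_mul, key, hFcard]
  simp

open Classical in
lemma chernoff (n : ℕ) (p : ℝ) (h0 : 0 ≤ p) (h1 : p ≤ 1) (S : Finset (Fin n)) (a : ℝ) :
    ∑ G : SimpleGraph (Fin n),
      (if (Nat.card {w : Fin n | w ∉ S ∧ ∃ v ∈ S, G.Adj v w} : ℝ) < a then erW n p G else 0)
    ≤ (2 : ℝ) ^ a * ((1 + (1 - p) ^ S.card) / 2) ^ (n - S.card) := by
  have hm : (Sᶜ).card = n - S.card := by rw [Finset.card_compl, Fintype.card_fin]
  have key : ∀ G : SimpleGraph (Fin n),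
      (if (Nat.card {w : Fin n | w ∉ S ∧ ∃ v ∈ S, G.Adj v w} : ℝ) < a then erW n p G else 0)
      ≤ ∑ A ∈ (Sᶜ).powerset, (2 : ℝ) ^ a * (1 / 2) ^ (n - S.card) *
        (if ∀ v ∈ S, ∀ w ∈ A, ¬ G.Adj v w then erW n p G else 0) := by
    intro G
    have hw := erW_nonneg h0 h1 G
    split_ifs with h
    · set N : Finset (Fin n) := Finset.univ.filter (fun w => w ∉ S ∧ ∃ v ∈ S, G.Adj v w) with hN
      have hNc : Nat.card {w : Fin n | w ∉ S ∧ ∃ v ∈ S, G.Adj v w} = N.card := by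
        rw [Nat.card_eq_fintype_card, hN, ← Set.toFinset_card]
        congr 1
        ext; simp
      rw [hNc] at h
      have hNS : N ⊆ Sᶜ := by
        intro w hw; simp [hN] at hw; simp [hw.1]
      rw [← Finset.mul_sum, ← Finset.sum_filter, Finset.sum_const]
      have hset : (Sᶜ).powerset.filter (fun A => ∀ v ∈ S, ∀ w ∈ A, ¬ G.Adj v w)
          = (Sᶜ \ N).powerset := by
        ext A
        simp only [Finset.mem_filter, Finset.mem_powerset]
        constructor
        · rintro ⟨h1, h2⟩ w hwA
          rw [Finset.mem_sdiff]
          refine ⟨h1 hwA, ?_⟩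
          simp only [hN, Finset.mem_filter, not_and, Finset.mem_univ, true_and, not_exists]
          intro _ v hv
          exact h2 v hv w hwA
        · intro h1
          refine ⟨fun w hw => (Finset.mem_sdiff.mp (h1 hw)).1, ?_⟩
          intro v hv w hw hadj
          have := Finset.mem_sdiff.mp (h1 hw)
          apply this.2
          simp only [hN, Finset.mem_filter, Finset.mem_univ, true_and]
          exact ⟨by simpa using this.1, v, hv, hadj⟩
      rw [hset, Finset.card_powerset, Finset.card_sdiff_of_subset hNS, hm]
      have hNle : N.card ≤ n - S.card := hm ▸ Finset.card_le_card hNS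
      rw [nsmul_eq_mul, ← mul_assoc]
      apply le_mul_of_one_le_left hw
      obtain ⟨d, hd⟩ := Nat.exists_eq_add_of_le hNle
      have e1 : n - S.card - N.card = d := by omega
      rw [e1, hd, pow_add]
      have : (2 : ℝ) ^ N.card ≤ 2 ^ a := by
        rw [← Real.rpow_natCast]
        exact Real.rpow_le_rpow_of_exponent_le (by norm_num) h.le
      push_cast
      have e2 : (2:ℝ) ^ a * ((1 / 2) ^ N.card * (1 / 2) ^ d) * 2 ^ d = 2 ^ a / 2 ^ N.card := by
        rw [one_div, inv_pow, inv_pow]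
        field_simp
      rw [e2, le_div_iff₀ (by positivity)]
      linarith
    · apply Finset.sum_nonneg
      intro A _
      split_ifs <;> positivity
  refine (Finset.sum_le_sum (fun G _ => key G)).trans ?_
  rw [Finset.sum_comm]
  have : ∀ A ∈ (Sᶜ).powerset, ∑ G : SimpleGraph (Fin n), (2 : ℝ) ^ a * (1 / 2) ^ (n - S.card) *
        (if ∀ v ∈ S, ∀ w ∈ A, ¬ G.Adj v w then erW n p G else 0)
        = (2 : ℝ) ^ a * (1 / 2) ^ (n - S.card) *
          (((1 - p) ^ S.card) ^ A.card * 1 ^ ((Sᶜ).card - A.card)) := by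
    intro A hA
    rw [← Finset.mul_sum, erProb_noedge, pow_mul, one_pow, mul_one]
    rw [Finset.mem_powerset] at hA
    rw [Finset.disjoint_right]
    intro w hw
    simpa using hA hw
  rw [Finset.sum_congr rfl this, ← Finset.mul_sum, Finset.sum_pow_mul_eq_add_pow, hm, mul_assoc,
    ← mul_pow]
  apply le_of_eq
  congr 2
  ring

lemma bonf (p : ℝ) (h0 : 0 ≤ p) (h1 : p ≤ 1) (k : ℕ) :
    (1 - p) ^ k ≤ 1 - k * p + k * (k - 1) / 2 * p ^ 2 := by
  induction k with
  | zero => simp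
  | succ k ih =>
    have h : 0 ≤ 1 - p := by linarith
    have := mul_le_mul_of_nonneg_left ih h
    rw [pow_succ']
    refine this.trans ?_
    have hk : (0 : ℝ) ≤ k * (k - 1) := by
      rcases k with _ | k
      · simp
      · push_cast; ring_nf; positivity
    have : 0 ≤ (k * (k - 1) : ℝ) * p ^ 3 := by positivity
    push_cast
    nlinarith

lemma numeric (n k : ℕ) (p L : ℝ) (h0 : 0 ≤ p) (h1 : p ≤ 1) (hk : 1 ≤ k)
    (hkp : ((k : ℝ) - 1) * p ≤ 1 / 2) (hkn : (k : ℝ) ≤ n / 2) (hL : 400 * L ≤ n * p) :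
    (2 : ℝ) ^ ((k : ℝ) * ((n : ℝ) - k) * p / 2) * ((1 + (1 - p) ^ k) / 2) ^ (n - k)
      ≤ Real.exp (-5 * k * L) := by
  have hb := bonf p h0 h1 k
  have hk' : (1 : ℝ) ≤ k := by exact_mod_cast hk
  have hkn' : k ≤ n := by
    have : (k : ℝ) ≤ n := by linarith [Nat.cast_nonneg (α := ℝ) n]
    exact_mod_cast this
  have h2 : (1 + (1 - p) ^ k) / 2 ≤ Real.exp (-(3 / 8 * (k * p))) := by
    refine le_trans ?_ (Real.add_one_le_exp _)
    have : (k * p) * (((k : ℝ) - 1) * p) ≤ (k * p) * (1 / 2) :=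
      mul_le_mul_of_nonneg_left hkp (by positivity)
    nlinarith
  have h3 : 0 ≤ (1 + (1 - p) ^ k) / 2 := by
    have : 0 ≤ 1 - p := by linarith
    positivity
  have h4 := pow_le_pow_left₀ h3 h2 (n - k)
  rw [← Real.exp_nat_mul, Nat.cast_sub hkn'] at h4
  rw [Real.rpow_def_of_pos (by norm_num)]
  refine (mul_le_mul_of_nonneg_left h4 (Real.exp_pos _).le).trans ?_
  rw [← Real.exp_add, Real.exp_le_exp]
  have hl := Real.log_two_lt_d9
  have hx : (0 : ℝ) ≤ k * ((n : ℝ) - k) * p := by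
    have : (0 : ℝ) ≤ (n : ℝ) - k := by linarith
    positivity
  have h5 : Real.log 2 * (k * ((n : ℝ) - k) * p) ≤ 0.7 * (k * ((n : ℝ) - k) * p) :=
    mul_le_mul_of_nonneg_right (by linarith) hx
  have h6 : k * (n / 2 * p) ≤ k * (((n : ℝ) - k) * p) := by
    have : (n : ℝ) / 2 ≤ n - k := by linarith
    gcongr
  have h7 : (k : ℝ) * (400 * L) ≤ k * (n * p) := by gcongr
  nlinarith

lemma union_sum (n : ℕ) (hn : 1 ≤ n) :
    ∑ S : Finset (Fin n), (if 1 ≤ S.card then ((n : ℝ) ^ 5)⁻¹ ^ S.card else 0) ≤ ((n : ℝ) ^ 3)⁻¹ := by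
  have hn' : (1 : ℝ) ≤ n := by exact_mod_cast hn
  have h1 : ∑ S : Finset (Fin n), (if 1 ≤ S.card then ((n : ℝ) ^ 5)⁻¹ ^ S.card else 0)
      = ∑ k ∈ Finset.range (n + 1), (n.choose k) • (if 1 ≤ k then ((n : ℝ) ^ 5)⁻¹ ^ k else 0) := by
    have := Finset.sum_powerset_apply_card
      (fun k => if 1 ≤ k then ((n : ℝ) ^ 5)⁻¹ ^ k else 0) (x := (Finset.univ : Finset (Fin n)))
    simpa using this
  rw [h1, Finset.sum_range_succ']
  simp only [Nat.le_add_left, if_true, nonpos_iff_eq_zero, one_ne_zero, if_false, smul_zero, add_zero]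
  have : ∀ k ∈ Finset.range n, (n.choose (k + 1)) • ((n : ℝ) ^ 5)⁻¹ ^ (k + 1) ≤ ((n : ℝ) ^ 4)⁻¹ := by
    intro k _
    rw [nsmul_eq_mul]
    have hc : (n.choose (k + 1) : ℝ) ≤ (n : ℝ) ^ (k + 1) := by
      exact_mod_cast Nat.choose_le_pow n (k + 1)
    calc (n.choose (k + 1) : ℝ) * ((n : ℝ) ^ 5)⁻¹ ^ (k + 1)
        ≤ (n : ℝ) ^ (k + 1) * ((n : ℝ) ^ 5)⁻¹ ^ (k + 1) := by gcongr
      _ = ((n : ℝ) ^ 4)⁻¹ ^ (k + 1) := by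
          rw [← mul_pow]; congr 1; field_simp
      _ ≤ ((n : ℝ) ^ 4)⁻¹ ^ 1 := by
          apply pow_le_pow_of_le_one (by positivity) _ (by omega)
          exact inv_le_one_of_one_le₀ (one_le_pow₀ hn')
      _ = _ := pow_one _
  refine (Finset.sum_le_sum this).trans ?_
  rw [Finset.sum_const, Finset.card_range, nsmul_eq_mul]
  apply le_of_eq
  field_simp

open Classical in
lemma main_bound (c : ℝ) (hc₀ : 0 < c) (hc₁ : c ≤ 1/2) (n : ℕ) (p : ℝ) (hn : 3 ≤ n)
    (hp : 400 * Real.log n / n ≤ p) (hp1 : p ≤ 1) :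
    0 ≤ erProb n p (fun G => ∃ S : Finset (Fin n),
            1 ≤ S.card ∧ S.card ≤ ⌈c / p⌉₊ ∧
            (Nat.card {w : Fin n | w ∉ S ∧ ∃ v ∈ S, G.Adj v w} : ℝ) <
              (S.card : ℝ) * ((n : ℝ) - S.card) * p / 2) ∧
    erProb n p (fun G => ∃ S : Finset (Fin n),
            1 ≤ S.card ∧ S.card ≤ ⌈c / p⌉₊ ∧
            (Nat.card {w : Fin n | w ∉ S ∧ ∃ v ∈ S, G.Adj v w} : ℝ) <
              (S.card : ℝ) * ((n : ℝ) - S.card) * p / 2) ≤ ((n : ℝ) ^ 3)⁻¹ := by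
  have hn' : (3 : ℝ) ≤ n := by exact_mod_cast hn
  have hlog : 1 ≤ Real.log n := by
    rw [Real.le_log_iff_exp_le (by linarith)]
    linarith [Real.exp_one_lt_d9]
  have hL : 400 * Real.log n ≤ n * p := by
    rw [div_le_iff₀ (by linarith)] at hp
    linarith
  have hp0 : 0 < p := lt_of_lt_of_le (by positivity) hp
  have hw := fun G => erW_nonneg (n := n) hp0.le hp1 G
  unfold erProb
  constructor
  · apply Finset.sum_nonneg
    intro G _
    split_ifs
    · exact hw G
    · exact le_rfl
  refine le_trans ?_ (union_sum n (by omega))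
  have step : ∀ G : SimpleGraph (Fin n), (if ∃ S : Finset (Fin n),
            1 ≤ S.card ∧ S.card ≤ ⌈c / p⌉₊ ∧
            (Nat.card {w : Fin n | w ∉ S ∧ ∃ v ∈ S, G.Adj v w} : ℝ) <
              (S.card : ℝ) * ((n : ℝ) - S.card) * p / 2 then erW n p G else 0) ≤
      ∑ S : Finset (Fin n), (if 1 ≤ S.card ∧ S.card ≤ ⌈c / p⌉₊ then
        (if (Nat.card {w : Fin n | w ∉ S ∧ ∃ v ∈ S, G.Adj v w} : ℝ) <
              (S.card : ℝ) * ((n : ℝ) - S.card) * p / 2 then erW n p G else 0) else 0) := by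
    intro G
    have hnn : ∀ S ∈ (Finset.univ : Finset (Finset (Fin n))),
        0 ≤ (if 1 ≤ S.card ∧ S.card ≤ ⌈c / p⌉₊ then
        (if (Nat.card {w : Fin n | w ∉ S ∧ ∃ v ∈ S, G.Adj v w} : ℝ) <
              (S.card : ℝ) * ((n : ℝ) - S.card) * p / 2 then erW n p G else 0) else 0) := by
      intro S _
      have := hw G
      split_ifs <;> first | exact this | exact le_rfl
    split_ifs with h
    · obtain ⟨S, h1, h2, h3⟩ := h
      refine le_trans ?_ (Finset.single_le_sum hnn (Finset.mem_univ S))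
      rw [if_pos ⟨h1, h2⟩, if_pos h3]
    · exact Finset.sum_nonneg hnn
  refine (Finset.sum_le_sum (fun G _ => le_trans (le_of_eq ?_) (step G))).trans ?_
  · unfold erW
    congr 1
  rw [Finset.sum_comm]
  apply Finset.sum_le_sum
  intro S _
  by_cases h1 : 1 ≤ S.card
  swap
  · simp [h1]
  rw [if_pos h1]
  by_cases h2 : S.card ≤ ⌈c / p⌉₊
  swap
  · simp only [h2, and_false, if_false, Finset.sum_const_zero]; positivity
  simp only [h1, h2, and_self, if_true]
  refine (chernoff n p hp0.le hp1 S _).trans ?_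
  have hkp : ((S.card : ℝ) - 1) * p ≤ 1 / 2 := by
    have h3 : (S.card : ℝ) ≤ (⌈c / p⌉₊ : ℝ) := by exact_mod_cast h2
    have h4 := Nat.ceil_lt_add_one (a := c / p) (by positivity)
    have h5 : (S.card : ℝ) - 1 ≤ c / p := by linarith
    rw [le_div_iff₀ hp0] at h5
    linarith
  have hkn : (S.card : ℝ) ≤ n / 2 := by
    have h6 : (S.card : ℝ) * p ≤ n / 2 * p := by nlinarith
    exact le_of_mul_le_mul_right h6 hp0
  refine (numeric n S.card p (Real.log n) hp0.le hp1 h1 hkp hkn hL).trans ?_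
  apply le_of_eq
  have : -5 * (S.card : ℝ) * Real.log n = (S.card : ℝ) * (-((5 : ℕ) * Real.log n)) := by
    push_cast; ring
  rw [this, Real.exp_nat_mul, Real.exp_neg, Real.exp_nat_mul, Real.exp_log (by linarith)]

/-- For every `c ∈ (0,1/2]` there is `C > 1` such that for `C log n / n ≤ p(n) ≤ 1`,
the probability that `G(n, p(n))` contains a vertex set `S` with `1 ≤ |S| ≤ ⌈c/p(n)⌉`
and `|N(S)| < |S| (n - |S|) p(n) / 2` is `o(n⁻²)`. -/
theorem stmt5 (c : ℝ) (hc₀ : 0 < c) (hc₁ : c ≤ 1/2) :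
    ∃ C : ℝ, 1 < C ∧ ∀ p : ℕ → ℝ,
      (∀ᶠ n : ℕ in atTop, C * Real.log n / n ≤ p n ∧ p n ≤ 1) →
      (fun n : ℕ => erProb n (p n)
          (fun G => ∃ S : Finset (Fin n),
            1 ≤ S.card ∧ S.card ≤ ⌈c / p n⌉₊ ∧
            (Nat.card {w : Fin n | w ∉ S ∧ ∃ v ∈ S, G.Adj v w} : ℝ) <
              (S.card : ℝ) * ((n : ℝ) - S.card) * p n / 2))
        =o[atTop] (fun n : ℕ => ((n : ℝ) ^ 2)⁻¹) := by
  refine ⟨400, by norm_num, ?_⟩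
  intro p hp
  have hb : (fun n : ℕ => erProb n (p n)
          (fun G => ∃ S : Finset (Fin n),
            1 ≤ S.card ∧ S.card ≤ ⌈c / p n⌉₊ ∧
            (Nat.card {w : Fin n | w ∉ S ∧ ∃ v ∈ S, G.Adj v w} : ℝ) <
              (S.card : ℝ) * ((n : ℝ) - S.card) * p n / 2))
        =O[atTop] (fun n : ℕ => ((n : ℝ) ^ 3)⁻¹) := by
    apply IsBigO.of_bound 1
    filter_upwards [hp, eventually_ge_atTop 3] with n h hn
    have := main_bound c hc₀ hc₁ n (p n) hn h.1 h.2
    rw [Real.norm_of_nonneg this.1, Real.norm_of_nonneg (by positivity), one_mul]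
    exact this.2
  refine hb.trans_isLittleO ?_
  have h1 : (fun n : ℕ => ((n : ℝ))⁻¹) =o[atTop] (fun _ : ℕ => (1 : ℝ)) := by
    rw [isLittleO_one_iff]
    exact tendsto_inv_atTop_nhds_zero_nat
  have h2 := (isBigO_refl (fun n : ℕ => ((n : ℝ) ^ 2)⁻¹) atTop).mul_isLittleO h1
  refine h2.congr ?_ ?_
  · intro n
    rw [← mul_inv, ← pow_succ]
  · intro n
    rw [mul_one]
end

section
/- There exist an absolute constant K > 0 and n₀ such that the following holds for every even n ≥ n₀ and every integer d with 3 ≤ d ≤ n/5: for every (n-d)-regular graph X̄ on n vertices, the number m(X̄) of perfect matchings of X̄ is positive and satisfies |log( m(X̄) · (n/2)! · 2^{n/2} / n! ) + (d-1)/2| ≤ K·d²/n. -/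
open Finset Classical in
noncomputable def PMs {V : Type*} [Fintype V] (G : SimpleGraph V) : Finset (Equiv.Perm V) :=
  univ.filter (fun f => (∀ v, f (f v) = v) ∧ ∀ v, G.Adj v (f v))

open Finset Classical in
lemma conj_mem {V : Type*} [Fintype V] (G : SimpleGraph V) (f : Equiv.Perm V)
    (hf : f ∈ PMs G) (v a : V) (h1 : G.Adj v a) (h2 : G.Adj (f v) (f a)) :
    Equiv.swap (f v) a * f * Equiv.swap (f v) a ∈ PMs G := by
  simp only [PMs, mem_filter, mem_univ, true_and, Equiv.Perm.mul_apply] at hf ⊢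
  obtain ⟨hi, ha⟩ := hf
  refine ⟨fun w => by simp [hi], fun w => ?_⟩
  have hw := ha w
  by_cases e1 : w = f v
  · subst e1
    rw [Equiv.swap_apply_left]
    have : f a ≠ a := fun h => (ha a).ne h.symm
    by_cases e2 : f a = f v
    · exact absurd (f.injective e2) h1.ne'
    · rwa [Equiv.swap_apply_of_ne_of_ne e2 this]
  by_cases e2 : w = a
  · subst e2
    rw [Equiv.swap_apply_right, hi, Equiv.swap_apply_of_ne_of_ne (ha v).ne h1.ne]
    exact h1.symm
  rw [Equiv.swap_apply_of_ne_of_ne e1 e2]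
  by_cases e3 : f w = f v
  · rw [e3, Equiv.swap_apply_left, f.injective e3]; exact h1
  by_cases e4 : f w = a
  · rw [e4, Equiv.swap_apply_right]
    have : f a = w := by rw [← e4, hi]
    rw [← this]; exact h2.symm
  rwa [Equiv.swap_apply_of_ne_of_ne e3 e4]

open Finset Classical in
lemma upper {V : Type*} [Fintype V] (G : SimpleGraph V) (d : ℕ)
    (hG : ∀ v, #{a | ¬ G.Adj v a} ≤ d) (W : Finset V) (g : V → V) (v y : V)
    (hvW : v ∉ W) (hg : ∀ w ∈ W, g w ≠ v) :
    (Fintype.card V - 2 * d - 2 * #W) * #{f ∈ PMs G | (∀ w ∈ W, f w = g w) ∧ f v = y}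
      ≤ #{f ∈ PMs G | ∀ w ∈ W, f w = g w} := by
  set A := {f ∈ PMs G | (∀ w ∈ W, f w = g w) ∧ f v = y} with hA
  set B := {f ∈ PMs G | ∀ w ∈ W, f w = g w} with hB
  let good : Equiv.Perm V → Finset V := fun f =>
    {a | G.Adj v a ∧ G.Adj y (f a) ∧ a ∉ W ∧ a ∉ W.image g}
  have hgood : ∀ f ∈ A, Fintype.card V - 2 * d - 2 * #W ≤ #(good f) := by
    intro f hf
    have hsub : (univ : Finset V) ⊆ good f ∪ (({a | ¬ G.Adj v a} : Finset V) ∪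
        (({a | ¬ G.Adj y a} : Finset V).image f.symm ∪ (W ∪ W.image g))) := by
      intro a _
      simp only [good, mem_union, mem_filter, mem_univ, true_and, mem_image]
      by_cases q : G.Adj y (f a)
      · tauto
      · right; right; left
        exact ⟨f a, q, by simp⟩
    have h1 := card_le_card hsub
    have h2 := card_union_le (good f) (({a | ¬ G.Adj v a} : Finset V) ∪
        (({a | ¬ G.Adj y a} : Finset V).image f.symm ∪ (W ∪ W.image g)))
    have h3 := card_union_le ({a | ¬ G.Adj v a} : Finset V)
        (({a | ¬ G.Adj y a} : Finset V).image f.symm ∪ (W ∪ W.image g))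
    have h4 := card_union_le (({a | ¬ G.Adj y a} : Finset V).image f.symm) (W ∪ W.image g)
    have h5 := card_union_le W (W.image g)
    have h6 : #(W.image g) ≤ #W := card_image_le
    have h7 : #(({a | ¬ G.Adj y a} : Finset V).image f.symm) ≤ #({a | ¬ G.Adj y a} : Finset V) :=
      card_image_le
    have h8 := hG v
    have h9 := hG y
    rw [card_univ] at h1
    omega
  have hs : (Fintype.card V - 2 * d - 2 * #W) * #A ≤ #(A.sigma good) := by
    rw [card_sigma, mul_comm, ← smul_eq_mul]
    exact card_nsmul_le_sum _ _ _ hgood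
  refine hs.trans ?_
  have key : ∀ f ∈ A, ∀ a ∈ good f, (Equiv.swap y a * f * Equiv.swap y a) v = a := by
    intro f hf a ha
    simp only [hA, mem_filter, PMs, mem_univ, true_and, good] at hf ha
    obtain ⟨⟨hi, hadj⟩, hw, rfl⟩ := hf
    simp only [Equiv.Perm.mul_apply]
    rw [Equiv.swap_apply_of_ne_of_ne (hadj v).ne ha.1.ne, Equiv.swap_apply_left]
  refine card_le_card_of_injOn
    (fun p => Equiv.swap y p.2 * p.1 * Equiv.swap y p.2) ?_ ?_
  · rintro ⟨f, a⟩ hp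
    simp only [coe_sigma, Set.mem_sigma_iff, mem_coe] at hp
    obtain ⟨hf, ha⟩ := hp
    simp only [hA, hB, mem_filter, mem_univ, true_and, good, mem_coe, mem_image, not_exists, not_and] at hf ha ⊢
    obtain ⟨hf, hw, rfl⟩ := hf
    refine ⟨conj_mem G f hf v a ha.1 ha.2.1, fun w hwW => ?_⟩
    simp only [PMs, mem_filter, mem_univ, true_and] at hf
    simp only [Equiv.Perm.mul_apply]
    have n1 : w ≠ f v := by
      intro h
      apply hg w hwW
      rw [← hw w hwW, h, hf.1]
    have n2 : w ≠ a := by rintro rfl; exact ha.2.2.1 hwW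
    have n3 : f w ≠ f v := fun h => hvW (f.injective h ▸ hwW)
    have n4 : f w ≠ a := fun h => ha.2.2.2 w hwW (by rw [← hw w hwW, h])
    rw [Equiv.swap_apply_of_ne_of_ne n1 n2, Equiv.swap_apply_of_ne_of_ne n3 n4, hw w hwW]
  · rintro ⟨f, a⟩ hp ⟨f', a'⟩ hp' h
    simp only [coe_sigma, Set.mem_sigma_iff, mem_coe] at hp hp'
    simp only at h
    have e1 := key f hp.1 a hp.2
    have e2 := key f' hp'.1 a' hp'.2
    rw [h, e2] at e1
    subst e1
    have : f = f' := by simpa using h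
    subst this; rfl

open Finset Classical in
lemma lower {V : Type*} [Fintype V] (G : SimpleGraph V) (d : ℕ)
    (hG : ∀ v, #{a | ¬ G.Adj v a} ≤ d) (v y : V) (hvy : G.Adj v y) :
    (Fintype.card V - 2 * d) * (Fintype.card V - 2 * d - 2) * #(PMs G) ≤
      (Fintype.card V - 2 * d) * (Fintype.card V - 2 * d - 2) *
        (Fintype.card V * #{f ∈ PMs G | f v = y}) + Fintype.card V * d * #(PMs G) := by
  set N := Fintype.card V
  let good := {f ∈ PMs G | G.Adj (f v) (f y)}
  let bad := {f ∈ PMs G | ¬ G.Adj (f v) (f y)}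
  have hsum : #good + #bad = #(PMs G) := card_filter_add_card_filter_not _
  have hgood : #good ≤ N * #{f ∈ PMs G | f v = y} := by
    have : N * #{f ∈ PMs G | f v = y} = #((univ : Finset V) ×ˢ {f ∈ PMs G | f v = y}) := by
      rw [card_product, card_univ]
    rw [this]
    refine card_le_card_of_injOn
      (fun f => (f v, Equiv.swap (f v) y * f * Equiv.swap (f v) y)) ?_ ?_
    · intro f hf
      simp only [good, coe_filter, Set.mem_ofPred_eq] at hf
      simp only [coe_product, Set.mem_prod, mem_coe, mem_univ, true_and, mem_filter]
      refine ⟨conj_mem G f hf.1 v y hvy hf.2, ?_⟩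
      have h := hf.1
      simp only [PMs, mem_filter, mem_univ, true_and] at h
      simp only [Equiv.Perm.mul_apply]
      rw [Equiv.swap_apply_of_ne_of_ne (h.2 v).ne hvy.ne, Equiv.swap_apply_left]
    · intro f hf f' hf' h
      simp only [Prod.mk.injEq] at h
      obtain ⟨h1, h2⟩ := h
      rw [h1] at h2
      simpa using h2
  have hbad : (N - 2 * d) * (N - 2 * d - 2) * #bad ≤ N * d * #(PMs G) := by
    let P : Finset (V × V) := {p | ¬ G.Adj p.1 p.2}
    have hP : #P ≤ N * d := by
      have : P = (univ : Finset V).biUnion (fun a => ({b | ¬ G.Adj a b} : Finset V).image (fun b => (a, b))) := by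
        ext ⟨a, b⟩; simp [P]
      rw [this]
      refine card_biUnion_le_card_mul _ _ _ fun a _ => card_image_le.trans (hG a)
    have hb : #bad = ∑ p ∈ P, #{f ∈ bad | (f v, f y) = p} := by
      refine card_eq_sum_card_fiberwise ?_
      intro f hf
      simp only [bad, coe_filter, Set.mem_ofPred_eq] at hf
      simpa [P] using hf.2
    rw [hb, mul_sum]
    have hterm : ∀ p ∈ P, (N - 2 * d) * (N - 2 * d - 2) * #{f ∈ bad | (f v, f y) = p} ≤ #(PMs G) := by
      rintro ⟨a, b⟩ hp
      by_cases hya : y = a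
      · have : ({f ∈ bad | (f v, f y) = (a, b)} : Finset _) = ∅ := by
          refine filter_eq_empty_iff.2 ?_
          intro f hf h
          simp only [Prod.mk.injEq] at h
          simp only [bad, PMs, mem_filter, mem_univ, true_and] at hf
          have h3 : f y = v := by rw [hya, ← h.1, hf.1.1]
          apply hf.2
          rw [h.1, h3, ← hya]; exact hvy.symm
        rw [this]; simp
      have u1 := upper G d hG ∅ id v a (by simp) (by simp)
      have u2 := upper G d hG {v} (fun _ => a) y b (by simpa using hvy.ne') (by simpa using Ne.symm hya)
      simp only [notMem_empty, false_implies, implies_true, true_and, filter_true, card_empty, mul_zero, tsub_zero, mem_singleton, forall_eq, card_singleton, mul_one] at u1 u2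
      have hsub : #{f ∈ bad | (f v, f y) = (a, b)} ≤ #{f ∈ PMs G | f v = a ∧ f y = b} := by
        apply card_le_card
        intro f hf
        simp only [bad, mem_filter, Prod.mk.injEq] at hf ⊢
        exact ⟨hf.1.1, hf.2⟩
      calc _ ≤ (N - 2 * d) * ((N - 2 * d - 2) * #{f ∈ PMs G | f v = a ∧ f y = b}) := by
            rw [mul_assoc]; gcongr
        _ ≤ (N - 2 * d) * #{f ∈ PMs G | f v = a} := by gcongr
        _ ≤ _ := u1
    calc _ ≤ #P • #(PMs G) := sum_le_card_nsmul _ _ _ hterm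
      _ ≤ _ := by rw [smul_eq_mul]; gcongr
  calc _ = (N - 2 * d) * (N - 2 * d - 2) * #good + (N - 2 * d) * (N - 2 * d - 2) * #bad := by
        rw [← hsum, mul_add]
    _ ≤ _ := by gcongr

open Finset Classical in
lemma card_pm {V : Type*} [Fintype V] (G : SimpleGraph V) :
    Nat.card {M : G.Subgraph // M.IsPerfectMatching} = #(PMs G) := by
  rw [← Nat.card_eq_finsetCard]
  symm
  let F : (PMs G) → {M : G.Subgraph // M.IsPerfectMatching} := fun f =>
    ⟨{ verts := Set.univ
       Adj := fun a b => f.1 a = b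
       adj_sub := by
        rintro a b rfl
        have := f.2; simp only [PMs, mem_filter] at this
        exact this.2.2 a
       edge_vert := by simp
       symm := ⟨by
        rintro a b rfl
        have := f.2; simp only [PMs, mem_filter] at this
        exact this.2.1 a⟩ }, by
      rw [SimpleGraph.Subgraph.isPerfectMatching_iff]
      intro v
      exact ⟨f.1 v, rfl, fun w h => Eq.symm h⟩⟩
  refine Nat.card_eq_of_bijective F ⟨?_, ?_⟩
  · intro f f' h
    ext v
    have h1 := congrArg (fun M => M.1.Adj v (f'.1 v)) h
    simp only [F, eq_iff_iff, iff_true] at h1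
    exact h1
  · rintro ⟨M, hM⟩
    have hM' := hM
    rw [SimpleGraph.Subgraph.isPerfectMatching_iff] at hM'
    choose g hg1 hg2 using hM'
    have hi : Function.Involutive g := fun v => (hg2 _ _ (hg1 v).symm).symm
    refine ⟨⟨hi.toPerm, ?_⟩, ?_⟩
    · simp only [PMs, mem_filter, mem_univ, true_and, Function.Involutive.coe_toPerm]
      exact ⟨hi, fun v => (hg1 v).adj_sub⟩
    · apply Subtype.ext
      apply SimpleGraph.Subgraph.ext
      · exact (Set.eq_univ_of_forall hM.2).symm
      · ext a b
        simp only [F, Function.Involutive.coe_toPerm]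
        constructor
        · rintro rfl; exact hg1 a
        · intro h; exact (hg2 a b h).symm

open Finset Classical in
lemma card_top {V : Type*} [Fintype V] (k : ℕ) (hk : Fintype.card V = 2 * k) :
    #(PMs (⊤ : SimpleGraph V)) * (k.factorial * 2 ^ k) = (2 * k).factorial := by
  have h := Equiv.Perm.card_of_cycleType_mul_eq V (Multiset.replicate k 2)
  have e : (univ.filter fun g : Equiv.Perm V => g.cycleType = Multiset.replicate k 2)
      = PMs (⊤ : SimpleGraph V) := by
    ext f
    simp only [PMs, mem_filter, mem_univ, true_and, SimpleGraph.top_adj]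
    have h2 : (∀ v, f (f v) = v) ↔ f ^ 2 = 1 := by
      rw [Equiv.ext_iff]; simp [pow_two]
    have hs := Equiv.Perm.sum_cycleType f
    rw [h2]
    constructor
    · intro h
      refine ⟨Equiv.Perm.pow_prime_eq_one_iff.2 fun c hc => ?_, ?_⟩
      · rw [h] at hc; exact Multiset.eq_of_mem_replicate hc
      · rw [h] at hs
        have : f.support = univ := by
          rw [← card_eq_iff_eq_univ, ← hs, hk]; simp [mul_comm]
        intro v
        have hv : v ∈ f.support := this ▸ mem_univ v
        exact (Equiv.Perm.mem_support.1 hv).symm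
    · rintro ⟨h1, h3⟩
      have h4 := Equiv.Perm.pow_prime_eq_one_iff.1 h1
      have h5 := Multiset.eq_replicate_card.2 h4
      have : f.support = univ := by
        ext v; simp [Equiv.Perm.mem_support, (h3 v).symm]
      rw [this, card_univ, hk, h5, Multiset.sum_replicate, smul_eq_mul] at hs
      rw [h5]; congr 1; omega
  rw [e, hk] at h
  have hs : (Multiset.replicate k 2).sum = 2 * k := by simp [mul_comm]
  rw [if_pos ⟨hs.le, fun a ha => (Multiset.eq_of_mem_replicate ha).ge⟩, hs] at h
  rw [← h]
  rcases Nat.eq_zero_or_pos k with rfl | hk0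
  · simp
  · have : (Multiset.replicate k 2).toFinset = {2} := by
      rw [Multiset.toFinset_replicate, if_neg hk0.ne']
    rw [this]; simp [mul_comm]

lemma step_real (n d m e : ℝ) (hn : 20 ≤ n) (hd : 1 ≤ d) (h5 : 5 * d ≤ n) (hm : 0 < m)
    (h1 : (n - 2 * d) * e ≤ m)
    (h2 : (n - 2 * d) * (n - 2 * d - 2) * m ≤
      (n - 2 * d) * (n - 2 * d - 2) * (n * e) + n * d * m) :
    0 < m - e ∧ |Real.log (m - e) - Real.log m + 1 / n| ≤ 6 * d / n ^ 2 := by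
  have hn0 : 0 < n := by linarith
  obtain ⟨p, rfl⟩ : ∃ p, e = p * m := ⟨e / m, by field_simp⟩
  have h1' : (n - 2 * d) * p ≤ 1 := by
    by_contra! h
    have := mul_lt_mul_of_pos_right h hm
    linarith
  have h2' : (n - 2 * d) * (n - 2 * d - 2) ≤ (n - 2 * d) * (n - 2 * d - 2) * (n * p) + n * d := by
    by_contra! h
    have := mul_lt_mul_of_pos_right h hm
    linarith
  have t1 : n - 2 * d ≥ 3 / 5 * n := by linarith
  have t2 : n - 2 * d - 2 ≥ n / 2 := by linarith
  have t3 : n ^ 2 / 4 ≤ (n - 2 * d) * (n - 2 * d - 2) := by nlinarith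
  set Q := (n - 2 * d) * (n - 2 * d - 2)
  have hlow : 1 / n - 4 * d / n ^ 2 ≤ p := by
    have : n ^ 2 * (1 - n * p) ≤ 4 * d * n := by
      rcases le_or_gt (1 - n * p) 0 with h | h
      · have : n ^ 2 * (1 - n * p) ≤ 0 := mul_nonpos_of_nonneg_of_nonpos (by positivity) h
        have : 0 ≤ 4 * d * n := by positivity
        linarith
      · nlinarith [mul_le_mul_of_nonneg_right t3 h.le]
    have e1 : 1 / n - 4 * d / n ^ 2 = (n - 4 * d) / n ^ 2 := by field_simp
    rw [e1, div_le_iff₀ (by positivity)]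
    nlinarith
  have hup : p ≤ 1 / (n - 2 * d) := by
    rw [le_div_iff₀ (by linarith)]; linarith
  have hp1 : 1 - p ≥ 1 - 1 / (n - 2 * d) := by linarith
  have hp2 : 1 - 1 / (n - 2 * d) = (n - 2 * d - 1) / (n - 2 * d) := by
    have : n - 2 * d ≠ 0 := by linarith
    field_simp
  have hp3 : 0 < (n - 2 * d - 1) / (n - 2 * d) := div_pos (by linarith) (by linarith)
  have hp : 0 < 1 - p := by linarith
  have hme : m - p * m = (1 - p) * m := by ring
  rw [hme, Real.log_mul hp.ne' hm.ne']
  refine ⟨by positivity, ?_⟩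
  have l1 := Real.log_le_sub_one_of_pos hp
  have l2 := Real.one_sub_inv_le_log_of_pos hp
  have l3 : (1 - p)⁻¹ ≤ (n - 2 * d) / (n - 2 * d - 1) := by
    rw [← inv_div (n - 2 * d - 1)]
    exact inv_anti₀ hp3 (by linarith)
  have l4 : (n - 2 * d) / (n - 2 * d - 1) ≤ 1 + 1 / n + 6 * d / n ^ 2 := by
    rw [div_le_iff₀ (by linarith)]
    have e1 : 1 + 1 / n + 6 * d / n ^ 2 = (n ^ 2 + n + 6 * d) / n ^ 2 := by field_simp
    rw [e1, div_mul_eq_mul_div, le_div_iff₀ (by positivity)]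
    nlinarith
  have l5 : 4 * d / n ^ 2 ≤ 6 * d / n ^ 2 := by gcongr; norm_num
  rw [abs_le]
  constructor <;> linarith

open Finset Classical in
lemma main_ind {V : Type*} [Fintype V] (d : ℕ) (hn : 20 ≤ Fintype.card V) (hd : 1 ≤ d)
    (h5 : 5 * d ≤ Fintype.card V) (h0 : 0 < #(PMs (⊤ : SimpleGraph V))) (k : ℕ) :
    ∀ G : SimpleGraph V, (∀ v, #{a | ¬ G.Adj v a} ≤ d) → #(Gᶜ.edgeFinset) = k →
      0 < #(PMs G) ∧ |Real.log #(PMs G) - Real.log #(PMs (⊤ : SimpleGraph V))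
        + k / (Fintype.card V : ℝ)| ≤ k * (6 * d / (Fintype.card V : ℝ) ^ 2) := by
  induction k with
  | zero =>
    intro G hG hk
    have : G = ⊤ := by
      rw [card_eq_zero, SimpleGraph.edgeFinset_eq_empty] at hk
      exact compl_eq_bot.1 hk
    subst this
    simp [h0]
  | succ k ih =>
    intro G hG hk
    obtain ⟨e, he⟩ : (Gᶜ.edgeFinset).Nonempty := card_pos.1 (by omega)
    induction e using Sym2.ind with
    | _ v y =>
    have hvy : Gᶜ.Adj v y := by simpa using he
    obtain ⟨G', hadj⟩ : ∃ G' : SimpleGraph V, ∀ a b, G'.Adj a b ↔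
        G.Adj a b ∨ (a = v ∧ b = y) ∨ (a = y ∧ b = v) := by
      refine ⟨G ⊔ SimpleGraph.edge v y, ?_⟩
      intro a b
      simp only [SimpleGraph.sup_adj, SimpleGraph.edge_adj]
      have := hvy.ne
      constructor
      · tauto
      · rintro (h | ⟨rfl, rfl⟩ | ⟨rfl, rfl⟩)
        · tauto
        · tauto
        · exact Or.inr ⟨by tauto, this.symm⟩
    have hG' : ∀ v, #{a | ¬ G'.Adj v a} ≤ d := by
      intro w
      refine (card_le_card ?_).trans (hG w)
      intro a
      simp only [mem_filter, mem_univ, true_and, hadj]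
      tauto
    have hk' : #(G'ᶜ.edgeFinset) = k := by
      have : G'ᶜ.edgeFinset = Gᶜ.edgeFinset.erase s(v, y) := by
        ext e
        induction e using Sym2.ind with
        | _ a b =>
        simp only [SimpleGraph.mem_edgeFinset, SimpleGraph.mem_edgeSet, SimpleGraph.compl_adj,
          mem_erase, hadj, ne_eq, Sym2.eq_iff]
        tauto
      rw [this, card_erase_of_mem he, hk]; rfl
    obtain ⟨hpos, hb⟩ := ih G' hG' hk'
    have hG'vy : G'.Adj v y := (hadj _ _).2 (by tauto)
    have u := upper G' d hG' ∅ id v y (by simp) (by simp)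
    simp only [notMem_empty, false_implies, implies_true, true_and, filter_true, card_empty, mul_zero, tsub_zero] at u
    have l := lower G' d hG' v y hG'vy
    have hsplit : #(PMs G) + #{f ∈ PMs G' | f v = y} = #(PMs G') := by
      rw [← card_filter_add_card_filter_not (s := PMs G') (fun f => f v = y), add_comm]
      congr 2
      ext f
      simp only [PMs, mem_filter, mem_univ, true_and, hadj]
      constructor
      · rintro ⟨h1, h2⟩
        refine ⟨⟨h1, fun w => Or.inl (h2 w)⟩, fun h => ?_⟩
        have := h2 v
        rw [h] at this
        exact hvy.2 this
      · rintro ⟨⟨h1, h2⟩, h3⟩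
        refine ⟨h1, fun w => ?_⟩
        rcases h2 w with h | ⟨rfl, h⟩ | ⟨rfl, h⟩
        · exact h
        · exact absurd h h3
        · exact absurd (by rw [← h, h1]) h3
    set N := Fintype.card V
    set E := #{f ∈ PMs G' | f v = y}
    have c1 : ((N - 2 * d : ℕ) : ℝ) = (N : ℝ) - 2 * d := by
      rw [Nat.cast_sub (by omega)]; push_cast; ring
    have c2 : ((N - 2 * d - 2 : ℕ) : ℝ) = (N : ℝ) - 2 * d - 2 := by
      rw [Nat.cast_sub (by omega), c1]; push_cast; ring
    have u' : ((N : ℝ) - 2 * d) * E ≤ #(PMs G') := by rw [← c1]; exact_mod_cast u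
    have l' : ((N : ℝ) - 2 * d) * (N - 2 * d - 2) * #(PMs G') ≤
      ((N : ℝ) - 2 * d) * (N - 2 * d - 2) * (N * E) + N * d * #(PMs G') := by
      rw [← c2, ← c1]; exact_mod_cast l
    have s := step_real N d #(PMs G') E (by exact_mod_cast hn) (by exact_mod_cast hd)
      (by exact_mod_cast h5) (by exact_mod_cast hpos) u' l'
    have hsp : (#(PMs G') : ℝ) - E = #(PMs G) := by
      rw [← hsplit]; push_cast; ring
    rw [hsp] at s
    refine ⟨by exact_mod_cast s.1, ?_⟩
    have a1 := abs_le.1 s.2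
    have a2 := abs_le.1 hb
    have e1 : ((k + 1 : ℕ) : ℝ) / N = k / N + 1 / N := by push_cast; ring
    have e2 : ((k + 1 : ℕ) : ℝ) * (6 * d / (N : ℝ) ^ 2) = k * (6 * d / (N : ℝ) ^ 2) + 6 * d / (N : ℝ) ^ 2 := by
      push_cast; ring
    rw [e1, e2, abs_le]
    constructor <;> linarith [a1.1, a1.2, a2.1, a2.2]

/-- There is an absolute constant `K > 0` such that for every large even `n` and every
`3 ≤ d ≤ n/5`, every `(n-d)`-regular graph `X̄` on `n` vertices has a positive number
`m(X̄)` of perfect matchings, and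
`|log(m(X̄) (n/2)! 2^{n/2} / n!) + (d-1)/2| ≤ K d² / n`. -/
theorem stmt7 :
    ∃ K : ℝ, 0 < K ∧ ∃ n₀ : ℕ, ∀ n : ℕ, n₀ ≤ n → Even n →
      ∀ d : ℕ, 3 ≤ d → d ≤ n / 5 →
        ∀ X : SimpleGraph (Fin n), (∀ v, Nat.card (X.neighborSet v) = n - d) →
          0 < Nat.card {M : X.Subgraph // M.IsPerfectMatching} ∧
          |Real.log ((Nat.card {M : X.Subgraph // M.IsPerfectMatching} : ℝ) *
                (Nat.factorial (n / 2) : ℝ) * 2 ^ (n / 2) / (Nat.factorial n : ℝ)) +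
              ((d : ℝ) - 1) / 2|
            ≤ K * (d : ℝ) ^ 2 / n := by
  classical
  refine ⟨3, by norm_num, 20, ?_⟩
  intro n hn heven d hd hdn X hX
  obtain ⟨k, hk⟩ := heven
  have hk2 : n = 2 * k := by omega
  have hnk : n / 2 = k := by omega
  have h5 : 5 * d ≤ n := by omega
  have ht := card_top (V := Fin n) k (by simpa using hk2)
  have h0 : 0 < (PMs (⊤ : SimpleGraph (Fin n))).card := by
    rcases Nat.eq_zero_or_pos (PMs (⊤ : SimpleGraph (Fin n))).card with h | h
    · rw [h, zero_mul] at ht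
      exact absurd ht.symm (Nat.factorial_ne_zero _)
    · exact h
  have hdeg : ∀ v, X.degree v = n - d := by
    intro v
    rw [← hX v, Nat.card_eq_fintype_card, SimpleGraph.card_neighborSet_eq_degree]
  have hXd : ∀ v, (Finset.univ.filter fun a => ¬ X.Adj v a).card ≤ d := by
    intro v
    have h1 := Finset.card_filter_add_card_filter_not (s := (Finset.univ : Finset (Fin n)))
      (fun a => X.Adj v a)
    have h2 : (Finset.univ.filter fun a => X.Adj v a).card = n - d := by
      rw [← hdeg v, ← SimpleGraph.card_neighborFinset_eq_degree, SimpleGraph.neighborFinset_eq_filter]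
    rw [h2] at h1
    simp only [Finset.card_univ, Fintype.card_fin] at h1
    omega
  have hedge : n * (d - 1) = 2 * Xᶜ.edgeFinset.card := by
    rw [← SimpleGraph.sum_degrees_eq_twice_card_edges]
    have : ∀ v, Xᶜ.degree v = d - 1 := by
      intro v
      rw [SimpleGraph.degree_compl, hdeg v, Fintype.card_fin]; omega
    simp [this]
  obtain ⟨hpos, hb⟩ := main_ind (V := Fin n) d (by simpa using hn) (by omega) (by simpa using h5)
    h0 Xᶜ.edgeFinset.card X (by convert hXd) (by congr!)
  rw [card_pm]
  refine ⟨hpos, ?_⟩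
  rw [Fintype.card_fin] at hb
  have hn0 : (0 : ℝ) < n := by exact_mod_cast (by omega : 0 < n)
  have hE : (Xᶜ.edgeFinset.card : ℝ) = n * (d - 1) / 2 := by
    have : ((n * (d - 1) : ℕ) : ℝ) = 2 * Xᶜ.edgeFinset.card := by exact_mod_cast hedge
    rw [Nat.cast_mul, Nat.cast_sub (by omega)] at this
    push_cast at this
    linarith
  have hp' : (0 : ℝ) < (PMs X).card := by exact_mod_cast hpos
  have h0' : (0 : ℝ) < (PMs (⊤ : SimpleGraph (Fin n))).card := by exact_mod_cast h0
  have hq : ((PMs X).card : ℝ) * ((n / 2).factorial : ℝ) * 2 ^ (n / 2) / (n.factorial : ℝ)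
      = (PMs X).card / (PMs (⊤ : SimpleGraph (Fin n))).card := by
    have ht' : ((PMs (⊤ : SimpleGraph (Fin n))).card : ℝ) * (k.factorial * 2 ^ k)
        = (n.factorial : ℝ) := by
      rw [hk2] at *
      exact_mod_cast ht
    have : (0 : ℝ) < k.factorial := by exact_mod_cast Nat.factorial_pos k
    rw [hnk, ← ht']
    field_simp
  rw [hq, Real.log_div hp'.ne' h0'.ne']
  rw [hE] at hb
  have e1 : (n : ℝ) * (d - 1) / 2 / n = ((d : ℝ) - 1) / 2 := by field_simp
  have e2 : (n : ℝ) * (d - 1) / 2 * (6 * d / (n : ℝ) ^ 2) = 3 * (d * (d - 1)) / n := by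
    field_simp; ring
  rw [e1, e2] at hb
  refine hb.trans ?_
  gcongr
  nlinarith [(Nat.cast_nonneg d : (0 : ℝ) ≤ d)]
end

section
/- There exists a sequence ε_n → 0 such that the following holds for every even n, every integer d with 4 ≤ d ≤ n-1 and d³ ≤ n, every k ∈ {1,…,d}, every set of colour indices 1 ≤ i_1 < … < i_k ≤ d, and every family A of k-tuples of pairwise edge-disjoint perfect matchings of K_n: writing π for the map sending a d-tuple (M_1,…,M_d) ∈ 𝒢''_d(n) to the k-tuple (M_{i_1},…,M_{i_k}), one has (1-ε_n)·P(G''(n,k) ∈ A) ≤ P(π(G''(n,d)) ∈ A) ≤ (1+ε_n)·P(G''(n,k) ∈ A). -/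
/-- `M` is an ordered `d`-tuple of pairwise edge-disjoint perfect matchings of `K_n`
(each matching being viewed as a 1-regular simple graph on `[n]`). -/
def IsPMTuple {n d : ℕ} (M : Fin d → SimpleGraph (Fin n)) : Prop :=
  (∀ i, ∀ v, Nat.card ((M i).neighborSet v) = 1) ∧
  ∀ i j, i ≠ j → Disjoint (M i) (M j)

open Classical in
/-- Probability that `G''(n,d)`, the uniformly random ordered `d`-tuple of pairwise
edge-disjoint perfect matchings of `K_n`, satisfies the property `A`. -/
noncomputable def tupleProb (n d : ℕ) (A : (Fin d → SimpleGraph (Fin n)) → Prop) : ℝ :=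
  ((Finset.univ.filter (fun M : Fin d → SimpleGraph (Fin n) =>
      IsPMTuple M ∧ A M)).card : ℝ) /
  ((Finset.univ.filter (fun M : Fin d → SimpleGraph (Fin n) => IsPMTuple M)).card : ℝ)

section
open Finset Polynomial
open Classical in
noncomputable def mp {V : Type*} (G : SimpleGraph V) (S : Finset V) : ℝ[X] :=
  if h : S.Nonempty then
    X * mp G (S.erase h.choose) -
      ∑ w ∈ ((S.erase h.choose).filter (G.Adj h.choose)).attach, mp G ((S.erase h.choose).erase w.1)
  else 1
termination_by S.card
decreasing_by
  · exact Finset.card_erase_lt_of_mem h.choose_spec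
  · exact lt_of_le_of_lt (Finset.card_le_card (Finset.erase_subset _ _)) (Finset.card_erase_lt_of_mem h.choose_spec)

lemma mp_empty {V : Type*} (G : SimpleGraph V) : mp G ∅ = 1 := by
  rw [mp]; simp

open Classical in
lemma mp_rec {V : Type*} (G : SimpleGraph V) : ∀ (m : ℕ) (S : Finset V), S.card = m → ∀ v ∈ S,
    mp G S = X * mp G (S.erase v) -
      ∑ w ∈ S.erase v, if G.Adj v w then mp G ((S.erase v).erase w) else 0 := by
  intro m
  induction m using Nat.strong_induction_on with
  | _ m ih =>
  intro S hS v hv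
  have h : S.Nonempty := ⟨v, hv⟩
  obtain ⟨u, hu, hrec⟩ : ∃ u ∈ S, mp G S = X * mp G (S.erase u) -
      ∑ w ∈ S.erase u, if G.Adj u w then mp G ((S.erase u).erase w) else 0 := by
    refine ⟨h.choose, h.choose_spec, ?_⟩
    rw [mp, dif_pos h]
    congr 1
    rw [Finset.sum_attach _ (fun w => mp G ((S.erase h.choose).erase w)), Finset.sum_filter]
  by_cases huv : u = v
  · subst huv; exact hrec
  rw [hrec]
  have hvu : v ∈ S.erase u := by simp [hv, Ne.symm huv]
  have huv' : u ∈ S.erase v := by simp [hu, huv]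
  have c1 : (S.erase u).card < m := hS ▸ Finset.card_erase_lt_of_mem hu
  have c2 : (S.erase v).card < m := hS ▸ Finset.card_erase_lt_of_mem hv
  rw [ih _ c1 _ rfl v hvu, ih _ c2 _ rfl u huv']
  rw [← Finset.add_sum_erase _ _ hvu, ← Finset.add_sum_erase _ _ huv']
  set T := (S.erase u).erase v with hT
  have hT' : (S.erase v).erase u = T := by rw [hT, Finset.erase_right_comm]
  rw [hT']
  have key : ∀ a b : V, a ∈ S → b ∈ S → a ≠ b → (S.erase a).erase b = T → 
    ∑ w ∈ T, (if G.Adj a w then mp G ((S.erase a).erase w) else 0) =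
     X * ∑ w ∈ T, (if G.Adj a w then mp G (T.erase w) else 0) - 
     ∑ w ∈ T, ∑ z ∈ T, if w ≠ z ∧ G.Adj a w ∧ G.Adj b z then mp G ((T.erase w).erase z) else 0 := by
    intro a b ha hb hab habT
    rw [Finset.mul_sum, ← Finset.sum_sub_distrib]
    refine Finset.sum_congr rfl fun w hw => ?_
    by_cases haw : G.Adj a w
    · have hw' := hw
      rw [← habT] at hw'
      simp only [Finset.mem_erase] at hw'
      have hb' : b ∈ (S.erase a).erase w := by
        simp only [Finset.mem_erase]; exact ⟨Ne.symm hw'.1, Ne.symm hab, hb⟩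
      have hc : ((S.erase a).erase w).card < m := hS ▸ 
        lt_of_le_of_lt (Finset.card_le_card (Finset.erase_subset _ _)) (Finset.card_erase_lt_of_mem ha)
      rw [if_pos haw, if_pos haw, ih _ hc _ rfl b hb']
      have e1 : ((S.erase a).erase w).erase b = T.erase w := by
        rw [Finset.erase_right_comm, habT]
      rw [e1]
      congr 1
      rw [← Finset.add_sum_erase _ _ hw]
      simp only [ne_eq, not_true_eq_false, false_and, if_false, zero_add]
      refine Finset.sum_congr rfl fun z hz => ?_
      have : w ≠ z := by rintro rfl; simp at hz
      simp [this, haw]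
    · simp [haw]
  have k1 := key u v hu hv huv rfl
  have k2 := key v u hv hu (Ne.symm huv) hT'
  rw [k1, k2, Finset.sum_comm]
  have e3 : ∑ y ∈ T, ∑ x ∈ T, (if x ≠ y ∧ G.Adj u x ∧ G.Adj v y then mp G ((T.erase x).erase y) else 0)
    = ∑ w ∈ T, ∑ z ∈ T, if w ≠ z ∧ G.Adj v w ∧ G.Adj u z then mp G ((T.erase w).erase z) else 0 := by
    refine Finset.sum_congr rfl fun y _ => Finset.sum_congr rfl fun x _ => ?_
    rw [Finset.erase_right_comm]
    congr 1
    apply propext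
    constructor <;> (rintro ⟨a, b, c⟩; exact ⟨Ne.symm a, c, b⟩)
  rw [e3]
  simp only [G.adj_comm u v]
  ring

open Classical in
lemma mp_step {V : Type*} (G : SimpleGraph V) (S : Finset V) {v : V} (hv : v ∈ S) :
    mp G S = X * mp G (S.erase v) -
      ∑ w ∈ (S.erase v).filter (G.Adj v), mp G ((S.erase v).erase w) := by
  rw [Finset.sum_filter]; exact mp_rec G _ S rfl v hv

open Classical in
lemma mp_deriv {V : Type*} (G : SimpleGraph V) : ∀ (m : ℕ) (S : Finset V), S.card = m →
    derivative (mp G S) = ∑ v ∈ S, mp G (S.erase v) := by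
  intro m
  induction m using Nat.strong_induction_on with
  | _ m ih =>
  intro S hS
  rcases S.eq_empty_or_nonempty with rfl | ⟨v, hv⟩
  · simp [mp_empty]
  have c1 : (S.erase v).card < m := hS ▸ Finset.card_erase_lt_of_mem hv
  rw [← Finset.add_sum_erase _ _ hv, mp_rec G _ S rfl v hv]
  simp only [derivative_sub, derivative_mul, derivative_X, one_mul, derivative_sum]
  rw [ih _ c1 _ rfl]
  have e : ∀ w ∈ S.erase v, mp G (S.erase w) = X * mp G ((S.erase v).erase w) -
      ∑ z ∈ S.erase v, if z ≠ w ∧ G.Adj v z then mp G (((S.erase v).erase w).erase z) else 0 := by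
    intro w hw
    have hw' := Finset.mem_erase.1 hw
    rw [mp_rec G _ (S.erase w) rfl v (by simp [hv, Ne.symm hw'.1]), Finset.erase_right_comm (a := w)]
    congr 1
    rw [← Finset.add_sum_erase (S.erase v) _ hw]
    simp only [ne_eq, not_true_eq_false, false_and, if_false, zero_add]
    refine Finset.sum_congr rfl fun z hz => ?_
    have : z ≠ w := (Finset.mem_erase.1 hz).1
    simp [this]
  rw [Finset.sum_congr rfl e, Finset.sum_sub_distrib, Finset.mul_sum]
  have e2 : ∑ w ∈ S.erase v, derivative (if G.Adj v w then mp G ((S.erase v).erase w) else 0) =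
     ∑ w ∈ S.erase v, ∑ z ∈ S.erase v, if z ≠ w ∧ G.Adj v z then mp G (((S.erase v).erase w).erase z) else 0 := by
    rw [Finset.sum_comm]
    refine Finset.sum_congr rfl fun w hw => ?_
    rw [← Finset.add_sum_erase (S.erase v) _ hw]
    by_cases h : G.Adj v w
    · rw [if_pos h, ih _ (lt_of_le_of_lt (Finset.card_le_card (Finset.erase_subset _ _)) c1) _ rfl]
      simp only [ne_eq, not_true_eq_false, false_and, if_false, zero_add]
      refine Finset.sum_congr rfl fun z hz => ?_
      have : w ≠ z := Ne.symm (Finset.mem_erase.1 hz).1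
      simp [this, h, Finset.erase_right_comm]
    · simp [h]
  rw [e2]
  ring
end

section
open Finset Polynomial
/-- `M` is a perfect matching of `S`, avoiding `G`. -/
def IsPM {V : Type*} (G : SimpleGraph V) (S : Finset V) (M : SimpleGraph V) : Prop :=
  (∀ v ∈ S, ∃! w, M.Adj v w) ∧ (∀ v, v ∉ S → ∀ w, ¬ M.Adj v w) ∧ ∀ v w, M.Adj v w → ¬ G.Adj v w

open Classical in
noncomputable def pmc {V : Type*} [Fintype V] (G : SimpleGraph V) (S : Finset V) : ℕ :=
  (Finset.univ.filter (fun M : SimpleGraph V => IsPM G S M)).card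

lemma pmc_empty {V : Type*} [Fintype V] (G : SimpleGraph V) : pmc G ∅ = 1 := by
  classical
  rw [pmc, Finset.card_eq_one]
  refine ⟨⊥, ?_⟩
  ext M
  simp only [Finset.mem_filter, Finset.mem_univ, true_and, Finset.mem_singleton]
  constructor
  · rintro ⟨-, h, -⟩
    ext a b
    simpa using h a (by simp) b
  · rintro rfl
    exact ⟨by simp, by simp, by simp⟩

open Classical in
lemma pmc_fiber {V : Type*} [Fintype V] (G : SimpleGraph V) (S : Finset V) {v w : V} (hv : v ∈ S)
    (hw : w ∈ S.erase v) (hG : ¬ G.Adj v w) :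
    (Finset.univ.filter (fun M : SimpleGraph V => IsPM G S M ∧ M.Adj v w)).card =
      pmc G ((S.erase v).erase w) := by
  have hw' := Finset.mem_erase.1 hw
  rw [pmc]
  refine Finset.card_nbij' (fun M => M \ SimpleGraph.edge v w) (fun M => M ⊔ SimpleGraph.edge v w)
    ?_ ?_ ?_ ?_
  · intro M hM
    simp only [Finset.coe_filter, Finset.mem_univ, true_and, Set.mem_ofPred_eq] at hM ⊢
    obtain ⟨⟨h1, h2, h3⟩, h4⟩ := hM
    have uv : ∀ z, M.Adj v z → z = w := fun z hz => (h1 v hv).unique hz h4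
    have uw : ∀ z, M.Adj w z → z = v := fun z hz => (h1 w hw'.2).unique hz h4.symm
    refine ⟨?_, ?_, ?_⟩
    · intro a ha
      simp only [Finset.mem_erase] at ha
      obtain ⟨b, hb, hb'⟩ := h1 a ha.2.2
      refine ⟨b, ?_, ?_⟩
      · simp only [SimpleGraph.sdiff_adj, SimpleGraph.edge_adj]
        exact ⟨hb, by grind⟩
      · intro y hy
        exact hb' y hy.1
    · intro a ha b hab
      simp only [Finset.mem_erase, not_and, ne_eq] at ha
      simp only [SimpleGraph.sdiff_adj, SimpleGraph.edge_adj] at hab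
      by_cases haw : a = w
      · subst haw
        have := uw b hab.1
        subst this
        exact hab.2 ⟨Or.inr ⟨rfl, rfl⟩, hw'.1⟩
      by_cases hav : a = v
      · subst hav
        have := uv b hab.1
        subst this
        exact hab.2 ⟨Or.inl ⟨rfl, rfl⟩, Ne.symm hw'.1⟩
      exact h2 a (ha haw hav) b hab.1
    · intro a b hab
      exact h3 a b hab.1
  · intro M hM
    simp only [Finset.coe_filter, Finset.mem_univ, true_and, Set.mem_ofPred_eq] at hM ⊢
    obtain ⟨h1, h2, h3⟩ := hM
    have nv : ∀ z, ¬ M.Adj v z := h2 v (by simp)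
    have nw : ∀ z, ¬ M.Adj w z := h2 w (by simp)
    have hvw := hw'.1
    refine ⟨⟨?_, ?_, ?_⟩, ?_⟩
    · intro a ha
      by_cases haw : a = w
      · subst haw
        refine ⟨v, ?_, ?_⟩
        · simp only [SimpleGraph.sup_adj, SimpleGraph.edge_adj]; grind
        · intro y; simp only [SimpleGraph.sup_adj, SimpleGraph.edge_adj]; grind
      by_cases hav : a = v
      · subst hav
        refine ⟨w, ?_, ?_⟩
        · simp only [SimpleGraph.sup_adj, SimpleGraph.edge_adj]; grind
        · intro y; simp only [SimpleGraph.sup_adj, SimpleGraph.edge_adj]; grind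
      obtain ⟨b, hb, hb'⟩ := h1 a (by simp [haw, hav, ha])
      refine ⟨b, Or.inl hb, ?_⟩
      intro y; simp only [SimpleGraph.sup_adj, SimpleGraph.edge_adj]; grind
    · intro a ha b
      have := h2 a (by simp [ha]) b
      simp only [SimpleGraph.sup_adj, SimpleGraph.edge_adj]; grind
    · intro a b
      simp only [SimpleGraph.sup_adj, SimpleGraph.edge_adj]
      have := G.adj_comm v w
      have := h3 a b
      grind
    · simp only [SimpleGraph.sup_adj, SimpleGraph.edge_adj]; grind
  · intro M hM
    simp only [Finset.coe_filter, Finset.mem_univ, true_and, Set.mem_ofPred_eq] at hM ⊢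
    have := M.adj_comm v w
    ext a b
    simp only [SimpleGraph.sup_adj, SimpleGraph.sdiff_adj, SimpleGraph.edge_adj]; grind
  · intro M hM
    simp only [Finset.coe_filter, Finset.mem_univ, true_and, Set.mem_ofPred_eq] at hM ⊢
    have nv : ∀ z, ¬ M.Adj v z := hM.2.1 v (by simp)
    have nw : ∀ z, ¬ M.Adj w z := hM.2.1 w (by simp)
    ext a b
    simp only [SimpleGraph.sup_adj, SimpleGraph.sdiff_adj, SimpleGraph.edge_adj]; grind

open Classical in
lemma pmc_step {V : Type*} [Fintype V] (G : SimpleGraph V) (S : Finset V) {v : V} (hv : v ∈ S) :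
    pmc G S = ∑ w ∈ S.erase v, if G.Adj v w then 0 else pmc G ((S.erase v).erase w) := by
  have : (Finset.univ.filter (fun M : SimpleGraph V => IsPM G S M)) =
    (S.erase v).biUnion (fun w => Finset.univ.filter (fun M : SimpleGraph V => IsPM G S M ∧ M.Adj v w)) := by
    ext M
    simp only [Finset.mem_filter, Finset.mem_univ, true_and, Finset.mem_biUnion]
    constructor
    · intro h
      obtain ⟨w, hw, -⟩ := h.1 v hv
      refine ⟨w, ?_, h, hw⟩
      rw [Finset.mem_erase]
      refine ⟨hw.ne', ?_⟩
      by_contra hwS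
      exact h.2.1 w hwS v hw.symm
    · rintro ⟨w, -, h, -⟩; exact h
  rw [pmc, this, Finset.card_biUnion]
  · refine Finset.sum_congr rfl fun w hw => ?_
    split_ifs with hG
    · rw [Finset.card_eq_zero, Finset.filter_eq_empty_iff]
      rintro M - ⟨h, h'⟩
      exact h.2.2 v w h' hG
    · exact pmc_fiber G S hv hw hG
  · intro a _ b _ hab
    refine Finset.disjoint_left.2 ?_
    intro M h1 h2
    simp only [Finset.mem_filter, Finset.mem_univ, true_and] at h1 h2
    exact hab ((h1.1.1 v hv).unique h1.2 h2.2)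

open MeasureTheory

lemma int_poly (p : ℝ[X]) : Integrable (fun x : ℝ => p.eval x * Real.exp (-(1/2) * x ^ 2)) := by
  induction p using Polynomial.induction_on' with
  | add p q hp hq =>
    simp only [eval_add, add_mul]
    exact hp.add hq
  | monomial n a =>
    have := (integrable_rpow_mul_exp_neg_mul_sq (b := 1/2) (by norm_num) (s := n)
      (lt_of_lt_of_le (by norm_num) (Nat.cast_nonneg n))).const_mul a
    simpa [mul_assoc] using this

noncomputable def gl (p : ℝ[X]) : ℝ := ∫ x : ℝ, p.eval x * Real.exp (-(1/2) * x ^ 2)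

lemma gl_sub (p q : ℝ[X]) : gl (p - q) = gl p - gl q := by
  simp only [gl, eval_sub, sub_mul]
  exact integral_sub (int_poly p) (int_poly q)

lemma gl_sum {α : Type*} (s : Finset α) (f : α → ℝ[X]) : gl (∑ i ∈ s, f i) = ∑ i ∈ s, gl (f i) := by
  simp only [gl, eval_finsetSum, Finset.sum_mul]
  exact integral_finsetSum s (fun i _ => int_poly (f i))

lemma gl_X (p : ℝ[X]) : gl (X * p) = gl (derivative p) := by
  have h := integral_eq_zero_of_hasDerivAt_of_integrable
    (f := fun x : ℝ => p.eval x * Real.exp (-(1/2) * x ^ 2))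
    (f' := fun x : ℝ => (derivative p - X * p).eval x * Real.exp (-(1/2) * x ^ 2))
    (by
      intro x
      have h1 := p.hasDerivAt x
      have h2 : HasDerivAt (fun x : ℝ => Real.exp (-(1/2) * x ^ 2))
        (Real.exp (-(1/2) * x ^ 2) * (-(1/2) * (2 * x))) x := by
        have := ((hasDerivAt_pow 2 x).const_mul (-(1/2 : ℝ))).exp
        simpa using this
      refine (h1.mul h2).congr_deriv ?_
      rw [eval_sub, eval_mul, eval_X]
      ring) (int_poly _) (int_poly _)
  have h' : gl (derivative p - X * p) = 0 := h
  rw [gl_sub] at h'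
  linarith

lemma gl_one : gl 1 = √(2 * Real.pi) := by
  have := integral_gaussian (1/2)
  simp only [gl, eval_one, one_mul, this]
  congr 1
  ring

lemma gl_mp {V : Type*} [Fintype V] (G : SimpleGraph V) : ∀ (m : ℕ) (S : Finset V), S.card = m →
    gl (mp G S) = √(2 * Real.pi) * pmc G S := by
  classical
  intro m
  induction m using Nat.strong_induction_on with
  | _ m ih =>
  intro S hS
  rcases S.eq_empty_or_nonempty with rfl | ⟨v, hv⟩
  · simp [mp_empty, pmc_empty, gl_one]
  have c1 : (S.erase v).card < m := hS ▸ Finset.card_erase_lt_of_mem hv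
  rw [mp_rec G _ S rfl v hv, gl_sub, gl_X, mp_deriv G _ _ rfl, gl_sum, gl_sum, pmc_step G S hv,
    ← Finset.sum_sub_distrib]
  push_cast
  rw [Finset.mul_sum]
  refine Finset.sum_congr rfl fun w hw => ?_
  split_ifs
  · simp
  · rw [ih _ (lt_of_le_of_lt (Finset.card_le_card (Finset.erase_subset _ _)) c1) _ rfl]
    simp [gl]
end

section
open Finset Polynomial

open Classical in
/-- maximum degree at most `j` -/
def DegLe {V : Type*} [Fintype V] (G : SimpleGraph V) (j : ℕ) : Prop :=
  ∀ v, (Finset.univ.filter (G.Adj v)).card ≤ j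

open Classical in
/-- `j`-regular -/
def DegEq {V : Type*} [Fintype V] (G : SimpleGraph V) (j : ℕ) : Prop :=
  ∀ v, (Finset.univ.filter (G.Adj v)).card = j

lemma DegEq.le {V : Type*} [Fintype V] {G : SimpleGraph V} {j : ℕ} (h : DegEq G j) : DegLe G j :=
  fun v => (h v).le

noncomputable def ev {V : Type*} (G : SimpleGraph V) (x : ℝ) (S : Finset V) : ℝ := (mp G S).eval x

lemma ev_empty {V : Type*} (G : SimpleGraph V) (x : ℝ) : ev G x ∅ = 1 := by
  simp [ev, mp_empty]

open Classical in
lemma ev_step {V : Type*} [DecidableEq V] (G : SimpleGraph V) (x : ℝ) (S : Finset V) {v : V} (hv : v ∈ S) :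
    ev G x S = x * ev G x (S.erase v) -
      ∑ w ∈ (S.erase v).filter (G.Adj v), ev G x ((S.erase v).erase w) := by
  have : mp G S = X * mp G (S.erase v) -
      ∑ w ∈ (S.erase v).filter (G.Adj v), mp G ((S.erase v).erase w) := by
    convert mp_step G S hv
  rw [ev, this]
  simp [ev, eval_finsetSum]

open Classical in
lemma card_nb_le {V : Type*} [Fintype V] {G : SimpleGraph V} {j : ℕ} (hG : DegLe G j)
    (T : Finset V) (v : V) : ((T.filter (G.Adj v)).card : ℝ) ≤ j := by
  exact_mod_cast (Finset.card_le_card (Finset.filter_subset_filter _ (Finset.subset_univ T))).trans (hG v)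

lemma ev_pos {V : Type*} [Fintype V] [DecidableEq V] {G : SimpleGraph V} {j : ℕ} (hG : DegLe G j) {x : ℝ}
    (hx : 0 < x) (hj : 4 * (j : ℝ) ≤ x ^ 2) : ∀ (m : ℕ) (S : Finset V), S.card = m →
    0 < ev G x S ∧ ∀ v ∈ S, (x - 2 * j / x) * ev G x (S.erase v) ≤ ev G x S ∧
      ev G x S ≤ x * ev G x (S.erase v) := by
  classical
  have h2 : x / 2 ≤ x - 2 * j / x := by
    have : 2 * j / x ≤ x / 2 := by
      rw [div_le_div_iff₀ hx (by norm_num)]; nlinarith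
    linarith
  intro m
  induction m using Nat.strong_induction_on with
  | _ m ih =>
  intro S hS
  have main : ∀ v ∈ S, 0 < ev G x (S.erase v) ∧ (x - 2 * j / x) * ev G x (S.erase v) ≤ ev G x S ∧
      ev G x S ≤ x * ev G x (S.erase v) := by
    intro v hv
    have c1 : (S.erase v).card < m := hS ▸ Finset.card_erase_lt_of_mem hv
    obtain ⟨p1, p2⟩ := ih _ c1 (S.erase v) (by congr!)
    have b1 : ∑ w ∈ (S.erase v).filter (G.Adj v), ev G x ((S.erase v).erase w) ≤
        ∑ w ∈ (S.erase v).filter (G.Adj v), 2 / x * ev G x (S.erase v) := by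
      refine Finset.sum_le_sum fun w hw => ?_
      have hw1 := (Finset.mem_filter.1 hw).1
      have hp : 0 < ev G x ((S.erase v).erase w) :=
        (ih _ (lt_of_le_of_lt (Finset.card_le_card (Finset.erase_subset _ _)) c1) _ rfl).1
      have := (p2 w hw1).1
      have : x / 2 * ev G x ((S.erase v).erase w) ≤ ev G x (S.erase v) :=
        (mul_le_mul_of_nonneg_right h2 hp.le).trans this
      rw [div_mul_eq_mul_div, le_div_iff₀ hx]
      linarith
    have b0 : 0 ≤ ∑ w ∈ (S.erase v).filter (G.Adj v), ev G x ((S.erase v).erase w) := by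
      refine Finset.sum_nonneg fun w hw => ?_
      exact (ih _ (lt_of_le_of_lt (Finset.card_le_card (Finset.erase_subset _ _)) c1) _ rfl).1.le
    rw [Finset.sum_const, nsmul_eq_mul] at b1
    have b2 := card_nb_le hG (S.erase v) v
    have b3 : (((S.erase v).filter (G.Adj v)).card : ℝ) * (2 / x * ev G x (S.erase v)) ≤
      j * (2 / x * ev G x (S.erase v)) := mul_le_mul_of_nonneg_right b2 (by positivity)
    rw [ev_step G x S hv]
    refine ⟨p1, ?_, ?_⟩
    · have : (x - 2 * j / x) * ev G x (S.erase v) = x * ev G x (S.erase v) - j * (2 / x * ev G x (S.erase v)) := by ring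
      rw [this]
      exact sub_le_sub_left (b1.trans b3) _
    · exact sub_le_self _ b0
  refine ⟨?_, fun v hv => (main v hv).2⟩
  rcases S.eq_empty_or_nonempty with rfl | ⟨v, hv⟩
  · simp [ev_empty]
  · obtain ⟨h3, h4, -⟩ := main v hv
    refine lt_of_lt_of_le ?_ h4
    have : 0 < x - 2 * j / x := by linarith
    positivity

lemma ev_bounds {V : Type*} [Fintype V] {G : SimpleGraph V} {j : ℕ} (hG : DegLe G j) {x : ℝ}
    (hx : 0 < x) (hj : 4 * (j : ℝ) ≤ x ^ 2) : ∀ (m : ℕ) (S : Finset V), S.card = m →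
    (x - 2 * j / x) ^ m ≤ ev G x S ∧ ev G x S ≤ x ^ m := by
  classical
  have h2 : 0 ≤ x - 2 * j / x := by
    have : 2 * j / x ≤ x / 2 := by
      rw [div_le_div_iff₀ hx (by norm_num)]; nlinarith
    linarith
  intro m
  induction m with
  | zero => intro S hS; rw [Finset.card_eq_zero] at hS; subst hS; simp [ev_empty]
  | succ m ih =>
    intro S hS
    obtain ⟨v, hv⟩ : S.Nonempty := by rw [← Finset.card_pos]; omega
    have hc : (S.erase v).card = m := by rw [Finset.card_erase_of_mem hv]; omega
    obtain ⟨h3, h4⟩ := ih _ hc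
    obtain ⟨h5, h6⟩ := (ev_pos hG hx hj _ S rfl).2 v hv
    constructor
    · rw [pow_succ']
      exact (mul_le_mul_of_nonneg_left h3 h2).trans h5
    · rw [pow_succ']
      exact h6.trans (mul_le_mul_of_nonneg_left h4 hx.le)

lemma ev_abs {V : Type*} [Fintype V] {G : SimpleGraph V} {j : ℕ} (hG : DegLe G j) {x a : ℝ}
    (ha : 0 < a) (hx : |x| ≤ a) : ∀ (m : ℕ) (S : Finset V), S.card = m →
    |ev G x S| ≤ (a + j / a) ^ m := by
  classical
  set B := a + j / a with hB
  have hB0 : 0 < B := by positivity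
  have haB : a ≤ B := by rw [hB]; have : 0 ≤ (j : ℝ) / a := by positivity
                         linarith
  intro m
  induction m using Nat.strong_induction_on with
  | _ m ih =>
  intro S hS
  rcases S.eq_empty_or_nonempty with rfl | ⟨v, hv⟩
  · have : m = 0 := by simpa using hS.symm
    subst this; simp [ev_empty]
  obtain ⟨k, rfl⟩ : ∃ k, m = k + 1 := ⟨m - 1, by have := Finset.card_pos.2 ⟨v, hv⟩; omega⟩
  have hc : (S.erase v).card = k := by rw [Finset.card_erase_of_mem hv]; omega
  have i1 := ih k (by omega) _ hc
  have i2 : ∀ w ∈ (S.erase v).filter (G.Adj v), |ev G x ((S.erase v).erase w)| ≤ B ^ k / a := by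
    intro w hw
    have hw1 := (Finset.mem_filter.1 hw).1
    obtain ⟨l, rfl⟩ : ∃ l, k = l + 1 := ⟨k - 1, by have := Finset.card_pos.2 ⟨w, hw1⟩; omega⟩
    have hc2 : ((S.erase v).erase w).card = l := by rw [Finset.card_erase_of_mem hw1]; omega
    refine (ih l (by omega) _ hc2).trans ?_
    rw [le_div_iff₀ ha, pow_succ]
    exact mul_le_mul_of_nonneg_left haB (by positivity)
  rw [ev_step G x S hv]
  refine (abs_sub _ _).trans ?_
  have s1 : |∑ w ∈ (S.erase v).filter (G.Adj v), ev G x ((S.erase v).erase w)| ≤ j * (B ^ k / a) := by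
    refine (Finset.abs_sum_le_sum_abs _ _).trans ((Finset.sum_le_sum i2).trans ?_)
    rw [Finset.sum_const, nsmul_eq_mul]
    exact mul_le_mul_of_nonneg_right (card_nb_le hG _ v) (by positivity)
  have s2 : |x * ev G x (S.erase v)| ≤ a * B ^ k := by
    rw [abs_mul]; exact mul_le_mul hx i1 (abs_nonneg _) ha.le
  have : B ^ (k + 1) = a * B ^ k + j * (B ^ k / a) := by rw [pow_succ']; nth_rw 1 [hB]; ring
  rw [this]
  exact add_le_add s2 s1

lemma ev_neg {V : Type*} {G : SimpleGraph V} {x : ℝ} : ∀ (m : ℕ) (S : Finset V), S.card = m →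
    ev G (-x) S = (-1) ^ m * ev G x S := by
  classical
  intro m
  induction m using Nat.strong_induction_on with
  | _ m ih =>
  intro S hS
  rcases S.eq_empty_or_nonempty with rfl | ⟨v, hv⟩
  · have : m = 0 := by simpa using hS.symm
    subst this; simp [ev_empty]
  obtain ⟨k, rfl⟩ : ∃ k, m = k + 1 := ⟨m - 1, by have := Finset.card_pos.2 ⟨v, hv⟩; omega⟩
  have hc : (S.erase v).card = k := by rw [Finset.card_erase_of_mem hv]; omega
  rw [ev_step G x S hv, ev_step G (-x) S hv, ih k (by omega) _ hc, mul_sub, Finset.mul_sum]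
  congr 1
  · ring
  · refine Finset.sum_congr rfl fun w hw => ?_
    have hw1 := (Finset.mem_filter.1 hw).1
    obtain ⟨l, rfl⟩ : ∃ l, k = l + 1 := ⟨k - 1, by have := Finset.card_pos.2 ⟨w, hw1⟩; omega⟩
    have hc2 : ((S.erase v).erase w).card = l := by rw [Finset.card_erase_of_mem hw1]; omega
    rw [ih l (by omega) _ hc2]; ring

/-- the ratio -/
noncomputable def rt {V : Type*} [DecidableEq V] (G : SimpleGraph V) (x : ℝ) (S : Finset V) (v : V) : ℝ :=
  ev G x (S.erase v) / ev G x S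

lemma inv_diff {x s t : ℝ} (hx : 0 < x) (hs : s ≤ x / 2) (ht : t ≤ x / 2) {δ : ℝ} (h : |s - t| ≤ δ) :
    |1 / (x - s) - 1 / (x - t)| ≤ 4 * δ / x ^ 2 := by
  have h1 : x / 2 ≤ x - s := by linarith
  have h2 : x / 2 ≤ x - t := by linarith
  have h3 : 0 < x - s := by linarith
  have h4 : 0 < x - t := by linarith
  have : 1 / (x - s) - 1 / (x - t) = (s - t) / ((x - s) * (x - t)) := by field_simp; ring
  rw [this, abs_div, abs_of_pos (mul_pos h3 h4), div_le_div_iff₀ (mul_pos h3 h4) (by positivity)]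
  have h5 : x ^ 2 ≤ 4 * ((x - s) * (x - t)) := by nlinarith
  have h6 : 0 ≤ δ := (abs_nonneg _).trans h
  calc |s - t| * x ^ 2 ≤ δ * (4 * ((x - s) * (x - t))) := mul_le_mul h h5 (by positivity) h6
    _ = _ := by ring

section
variable {V : Type*} [Fintype V] [DecidableEq V] {G : SimpleGraph V} {j : ℕ} {x : ℝ}

lemma rt_bd (hG : DegLe G j) (hx : 0 < x) (hj : 16 * (j : ℝ) ≤ x ^ 2) (S : Finset V) {v : V} (hv : v ∈ S) :
    0 ≤ rt G x S v ∧ rt G x S v ≤ 2 / x := by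
  have hj0 : (0 : ℝ) ≤ j := by positivity
  have hj' : 4 * (j : ℝ) ≤ x ^ 2 := by linarith
  have h1 := (ev_pos hG hx hj' _ S rfl)
  have h2 := (ev_pos hG hx hj' _ (S.erase v) rfl).1
  have h3 := (h1.2 v hv).1
  have : 2 * j / x ≤ x / 2 := by
      rw [div_le_div_iff₀ hx (by norm_num)]; nlinarith
  refine ⟨div_nonneg h2.le h1.1.le, ?_⟩
  rw [rt, div_le_div_iff₀ h1.1 hx]
  nlinarith

open Classical in
lemma rt_eq (hG : DegLe G j) (hx : 0 < x) (hj : 16 * (j : ℝ) ≤ x ^ 2) (S : Finset V) {v : V} (hv : v ∈ S) :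
    rt G x S v = 1 / (x - ∑ w ∈ (S.erase v).filter (G.Adj v), rt G x (S.erase v) w) := by
  have hj0 : (0 : ℝ) ≤ j := by positivity
  have hj' : 4 * (j : ℝ) ≤ x ^ 2 := by linarith
  have h2 := (ev_pos hG hx hj' _ (S.erase v) rfl).1
  have h1 := (ev_pos hG hx hj' _ S rfl).1
  have : x - ∑ w ∈ (S.erase v).filter (G.Adj v), rt G x (S.erase v) w = ev G x S / ev G x (S.erase v) := by
    rw [eq_div_iff h2.ne', sub_mul, Finset.sum_mul, ev_step G x S hv]
    congr 1
    refine Finset.sum_congr rfl fun w hw => ?_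
    rw [rt, div_mul_cancel₀ _ h2.ne']
  rw [this, rt, one_div_div]

open Classical in
lemma sum_rt (hG : DegLe G j) (hx : 0 < x) (hj : 16 * (j : ℝ) ≤ x ^ 2) (S : Finset V) (v : V) :
    0 ≤ ∑ w ∈ S.filter (G.Adj v), rt G x S w ∧ ∑ w ∈ S.filter (G.Adj v), rt G x S w ≤ 2 * j / x ∧
    2 * j / x ≤ x / 2 := by
  refine ⟨Finset.sum_nonneg fun w hw => (rt_bd hG hx hj S (Finset.mem_filter.1 hw).1).1, ?_, ?_⟩
  · refine (Finset.sum_le_sum fun w hw => (rt_bd hG hx hj S (Finset.mem_filter.1 hw).1).2).trans ?_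
    rw [Finset.sum_const, nsmul_eq_mul]
    calc _ ≤ (j : ℝ) * (2 / x) := mul_le_mul_of_nonneg_right (card_nb_le hG _ v) (by positivity)
      _ = _ := by ring
  · have hj0 : (0 : ℝ) ≤ j := by positivity
    rw [div_le_div_iff₀ hx (by norm_num)]; nlinarith

lemma rt_A (hG : DegLe G j) (hx : 0 < x) (hj : 16 * (j : ℝ) ≤ x ^ 2) (S : Finset V) {v : V} (hv : v ∈ S) :
    |rt G x S v - 1 / x| ≤ 8 * j / x ^ 3 := by
  classical
  obtain ⟨h1, h2, h3⟩ := sum_rt hG hx hj (S.erase v) v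
  rw [rt_eq hG hx hj S hv]
  have := inv_diff hx (h2.trans h3) (t := 0) (by positivity) (δ := 2 * j / x)
    (by rw [sub_zero, abs_of_nonneg h1]; exact h2)
  rw [sub_zero] at this
  convert this using 1
  field_simp; ring

/-- a perturbed sum over exactly `c` neighbours -/
lemma sum_near {α : Type*} (T : Finset α) (f : α → ℝ) {c j : ℕ} {t δ : ℝ} (hc : T.card = c) (hcj : c ≤ j)
    (hδ : 0 ≤ δ) (h : ∀ w ∈ T, |f w - t| ≤ δ) : |∑ w ∈ T, f w - c * t| ≤ j * δ := by
  have : ∑ w ∈ T, f w - c * t = ∑ w ∈ T, (f w - t) := by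
    rw [Finset.sum_sub_distrib, Finset.sum_const, nsmul_eq_mul, hc]
  rw [this]
  refine (Finset.abs_sum_le_sum_abs _ _).trans ((Finset.sum_le_sum h).trans ?_)
  rw [Finset.sum_const, nsmul_eq_mul, hc]
  exact mul_le_mul_of_nonneg_right (by exact_mod_cast hcj) hδ

lemma rt_B (hG : DegEq G j) (hx : 0 < x) (hj : 16 * (j : ℝ) ≤ x ^ 2) {v w : V} (hvw : G.Adj v w) :
    |rt G x (univ.erase v) w - 1 / (x - (j - 1 : ℕ) * (1 / x))| ≤ 32 * j ^ 2 / x ^ 5 := by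
  classical
  have hw : w ∈ (univ : Finset V).erase v := by simp [hvw.ne']
  obtain ⟨h1, h2, h3⟩ := sum_rt hG.le hx hj ((univ.erase v).erase w) w
  rw [rt_eq hG.le hx hj _ hw]
  have hcard : ((((univ : Finset V).erase v).erase w).filter (G.Adj w)).card = j - 1 := by
    have e : (((univ : Finset V).erase v).erase w).filter (G.Adj w) = (univ.filter (G.Adj w)).erase v := by
      ext z
      simp only [Finset.mem_filter, Finset.mem_erase, Finset.mem_univ, and_true, true_and]
      constructor
      · rintro ⟨⟨-, h⟩, h'⟩; exact ⟨h, h'⟩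
      · rintro ⟨h, h'⟩; exact ⟨⟨h'.ne', h⟩, h'⟩
    rw [e, Finset.card_erase_of_mem (by simp [hvw.symm]), hG w]
  have hj1 : ((j - 1 : ℕ) : ℝ) ≤ j := by exact_mod_cast Nat.sub_le j 1
  have hj0 : (0 : ℝ) ≤ j := by positivity
  have ht : ((j - 1 : ℕ) : ℝ) * (1 / x) ≤ x / 2 := by
    have : 2 * j / x = 2 * (j * (1 / x)) := by ring
    have h4 : 0 < 1 / x := by positivity
    nlinarith
  have := inv_diff hx (h2.trans h3) ht (sum_near _ _ hcard (Nat.sub_le j 1) (δ := 8 * j / x ^ 3) (by positivity)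
    (fun u hu => rt_A hG.le hx hj _ (Finset.mem_filter.1 hu).1))
  convert this using 1
  field_simp; ring

/-- the third-level value -/
noncomputable def tv (j : ℕ) (x : ℝ) : ℝ := 1 / (x - j * (1 / (x - (j - 1 : ℕ) * (1 / x))))

lemma rt_C (hG : DegEq G j) (hx : 0 < x) (hj : 16 * (j : ℝ) ≤ x ^ 2) (v : V) :
    |rt G x univ v - tv j x| ≤ 128 * j ^ 3 / x ^ 7 := by
  classical
  obtain ⟨h1, h2, h3⟩ := sum_rt hG.le hx hj (univ.erase v) v
  rw [rt_eq hG.le hx hj _ (Finset.mem_univ v), tv]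
  have hcard : (((univ : Finset V).erase v).filter (G.Adj v)).card = j := by
    rw [← hG v]
    congr 1
    ext z
    simp only [Finset.mem_filter, Finset.mem_erase, Finset.mem_univ, and_true, true_and]
    exact ⟨fun h => h.2, fun h => ⟨h.ne', h⟩⟩
  have hj1 : ((j - 1 : ℕ) : ℝ) ≤ j := by exact_mod_cast Nat.sub_le j 1
  have hj0 : (0 : ℝ) ≤ j := by positivity
  have ht : ((j - 1 : ℕ) : ℝ) * (1 / x) ≤ x / 2 := by
    have : 2 * j / x = 2 * (j * (1 / x)) := by ring
    have h4 : 0 < 1 / x := by positivity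
    nlinarith
  have ht2 : (j : ℝ) * (1 / (x - (j - 1 : ℕ) * (1 / x))) ≤ x / 2 := by
    refine le_trans ?_ h3
    rw [mul_one_div, mul_comm 2, mul_div_assoc, div_eq_mul_inv]
    refine mul_le_mul_of_nonneg_left ?_ hj0
    rw [inv_le_comm₀ (by linarith) (by positivity), inv_div]
    linarith
  have := inv_diff hx (h2.trans h3) ht2 (sum_near _ _ hcard le_rfl (δ := 32 * j ^ 2 / x ^ 5) (by positivity)
    (fun u hu => rt_B hG hx hj (Finset.mem_filter.1 hu).2))
  convert this using 1
  field_simp; ring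
end
end

section
open Finset Polynomial MeasureTheory

lemma log_ev_deriv {V : Type*} [Fintype V] [DecidableEq V] {G : SimpleGraph V} {j : ℕ} {x : ℝ}
    (hG : DegLe G j) (hx : 0 < x) (hj : 16 * (j : ℝ) ≤ x ^ 2) :
    HasDerivAt (fun y => Real.log (ev G y univ)) (∑ v, rt G x univ v) x := by
  have hj0 : (0 : ℝ) ≤ j := by positivity
  have h1 := (ev_pos hG hx (by linarith) _ (univ : Finset V) rfl).1
  have h2 : HasDerivAt (fun y => ev G y univ) (∑ v : V, ev G x (univ.erase v)) x := by
    have := (mp G univ).hasDerivAt x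
    refine this.congr_deriv ?_
    rw [mp_deriv G _ _ rfl, eval_finsetSum]
    refine Finset.sum_congr rfl fun v _ => ?_
    rw [ev]; congr!
  have := h2.log h1.ne'
  simpa only [rt, Finset.sum_div] using this

lemma ev_compare {V : Type*} [Fintype V] {G G' : SimpleGraph V} {j : ℕ} {x : ℝ}
    (hG : DegEq G j) (hG' : DegEq G' j) (hx : 0 < x) (hj : 16 * (j : ℝ) ≤ x ^ 2) :
    ev G' x univ ≤ Real.exp (43 * Fintype.card V * j ^ 3 / x ^ 6) * ev G x univ := by
  classical
  set n : ℝ := (Fintype.card V : ℝ) with hn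
  have hn0 : 0 ≤ n := by positivity
  set K : ℝ := 43 * n * j ^ 3 with hK
  have hj0 : (0 : ℝ) ≤ j := by positivity
  have hy : ∀ y ∈ Set.Ici x, 0 < y ∧ 16 * (j : ℝ) ≤ y ^ 2 := by
    intro y hy
    have : x ≤ y := hy
    exact ⟨by linarith, by nlinarith⟩
  set f : ℝ → ℝ := fun y => Real.log (ev G y univ) - Real.log (ev G' y univ) + K * (y ^ 6)⁻¹ with hf
  have hd : ∀ y ∈ Set.Ici x, HasDerivAt f (∑ v, rt G y univ v - ∑ v, rt G' y univ v
      + K * (-(6 * y ^ 5) / (y ^ 6) ^ 2)) y := by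
    intro y hyx
    obtain ⟨h1, h2⟩ := hy y hyx
    have h3 := (hasDerivAt_pow 6 y).inv (by positivity)
    have := ((log_ev_deriv hG.le h1 h2).sub (log_ev_deriv hG'.le h1 h2)).add (h3.const_mul K)
    refine this.congr_deriv ?_
    norm_num
  have hanti : AntitoneOn f (Set.Ici x) := by
    refine antitoneOn_of_deriv_nonpos (convex_Ici x) (fun y h => (hd y h).continuousAt.continuousWithinAt)
      (fun y h => (hd y (interior_subset h)).differentiableAt.differentiableWithinAt) ?_
    intro y h
    have h' := interior_subset h
    rw [(hd y h').deriv]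
    obtain ⟨h1, h2⟩ := hy y h'
    rw [← Finset.sum_sub_distrib]
    have : ∑ v : V, (rt G y univ v - rt G' y univ v) ≤ ∑ v : V, (256 * j ^ 3 / y ^ 7) := by
      refine Finset.sum_le_sum fun v _ => ?_
      have a1 := abs_le.1 (rt_C hG h1 h2 v)
      have a2 := abs_le.1 (rt_C hG' h1 h2 v)
      have : (256 : ℝ) * j ^ 3 / y ^ 7 = 128 * j ^ 3 / y ^ 7 + 128 * j ^ 3 / y ^ 7 := by ring
      linarith [a1.2, a2.1]
    rw [Finset.sum_const, nsmul_eq_mul, Finset.card_univ, ← hn] at this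
    have e : K * (-(6 * y ^ 5) / (y ^ 6) ^ 2) = - (258 * (n * j ^ 3 / y ^ 7)) := by
      rw [hK]; field_simp; ring
    rw [e]
    have e2 : n * (256 * j ^ 3 / y ^ 7) = 256 * (n * j ^ 3 / y ^ 7) := by ring
    rw [e2] at this
    have : 0 ≤ n * j ^ 3 / y ^ 7 := by positivity
    linarith
  have hlow : ∀ y ∈ Set.Ici x, n * Real.log (1 - 2 * j / y ^ 2) ≤ f x := by
    intro y h
    refine le_trans ?_ (hanti Set.self_mem_Ici h h)
    obtain ⟨h1, h2⟩ := hy y h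
    have b1 := (ev_bounds hG.le h1 (by linarith) _ (univ : Finset V) rfl).1
    have b2 := (ev_bounds hG'.le h1 (by linarith) _ (univ : Finset V) rfl).2
    have p2 := (ev_pos hG'.le h1 (by linarith) _ (univ : Finset V) rfl).1
    have q : 0 < 1 - 2 * j / y ^ 2 := by
      rw [sub_pos, div_lt_one (by positivity)]
      have : 0 < y ^ 2 := by positivity
      linarith
    have e : y - 2 * j / y = y * (1 - 2 * j / y ^ 2) := by field_simp
    have l1 := Real.log_le_log (by rw [e]; positivity) b1
    have l2 := Real.log_le_log p2 b2
    rw [Real.log_pow, Finset.card_univ, e, Real.log_mul h1.ne' q.ne'] at l1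
    rw [Real.log_pow, Finset.card_univ] at l2
    rw [← hn] at l1 l2
    have : 0 ≤ K * (y ^ 6)⁻¹ := by positivity
    simp only [hf]
    linarith
  have hf0 : 0 ≤ f x := by
    have t1 : Filter.Tendsto (fun y : ℝ => n * Real.log (1 - 2 * j / y ^ 2)) Filter.atTop (nhds 0) := by
      have t2 : Filter.Tendsto (fun y : ℝ => 1 - 2 * (j : ℝ) / y ^ 2) Filter.atTop (nhds (1 - 0)) :=
        tendsto_const_nhds.sub (Filter.Tendsto.div_atTop tendsto_const_nhds (Filter.tendsto_pow_atTop (by norm_num)))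
      have t3 := (t2.log (by norm_num)).const_mul n
      simpa using t3
    refine le_of_tendsto t1 ?_
    filter_upwards [Filter.eventually_ge_atTop x] with y h
    exact hlow y h
  have p1 := (ev_pos hG.le hx (by linarith) _ (univ : Finset V) rfl).1
  have p2 := (ev_pos hG'.le hx (by linarith) _ (univ : Finset V) rfl).1
  rw [← Real.log_le_log_iff p2 (by positivity), Real.log_mul (by positivity) p1.ne', Real.log_exp]
  simp only [hf] at hf0
  rw [div_eq_mul_inv]
  linarith

lemma gl_mono {p q : ℝ[X]} (h : ∀ x, p.eval x ≤ q.eval x) : gl p ≤ gl q :=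
  integral_mono (int_poly p) (int_poly q) fun x => mul_le_mul_of_nonneg_right (h x) (Real.exp_pos _).le

lemma gl_affine (p : ℝ[X]) (a b : ℝ) : gl (C a * p + C b) = a * gl p + b * √(2 * Real.pi) := by
  have : C a * p + C b = (C a * p) - (C (-b) * 1) := by simp
  rw [this, gl_sub, ← gl_one]
  have h : ∀ (c : ℝ) (p : ℝ[X]), gl (C c * p) = c * gl p := by
    intro c p
    simp only [gl, eval_mul, eval_C, mul_assoc]
    exact integral_const_mul _ _
  rw [h, h]; ring

lemma gl_lower {p : ℝ[X]} (h0 : ∀ x, 0 ≤ p.eval x) {s m e : ℝ} (hm : 0 ≤ m) (he : 0 ≤ e)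
    (h : ∀ x ∈ Set.Icc s (s + 1), m ≤ p.eval x ∧ e ≤ Real.exp (-(1/2) * x ^ 2)) : m * e ≤ gl p := by
  have h1 : ∫ x in Set.Icc s (s + 1), p.eval x * Real.exp (-(1/2) * x ^ 2) ≤ gl p :=
    setIntegral_le_integral (int_poly p)
      (Filter.Eventually.of_forall fun x => mul_nonneg (h0 x) (Real.exp_pos _).le)
  refine le_trans ?_ h1
  have h2 : ∫ x in Set.Icc s (s + 1), m * e ≤
      ∫ x in Set.Icc s (s + 1), p.eval x * Real.exp (-(1/2) * x ^ 2) := by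
    refine setIntegral_mono_on ?_ (int_poly p).integrableOn measurableSet_Icc ?_
    · exact integrableOn_const (by simp)
    · intro x hx
      exact mul_le_mul (h x hx).1 (h x hx).2 he (hm.trans (h x hx).1)
  refine le_trans (le_of_eq ?_) h2
  rw [setIntegral_const]
  simp

lemma ev_abs_arg {n : ℕ} (hn : Even n) (G : SimpleGraph (Fin n)) (x : ℝ) :
    ev G x univ = ev G |x| univ := by
  rcases abs_cases x with ⟨h, -⟩ | ⟨h, -⟩
  · rw [h]
  · rw [h, ev_neg n univ (by simp), hn.neg_one_pow, one_mul]

lemma key_count : ∃ C : ℝ, 0 < C ∧ ∃ n0 : ℕ, ∀ n : ℕ, n0 ≤ n → Even n → ∀ j : ℕ, j ^ 3 ≤ n →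
    ∀ G G' : SimpleGraph (Fin n), DegEq G j → DegEq G' j →
      0 < (pmc G' univ : ℝ) ∧ (pmc G univ : ℝ) ≤ (1 + C / n) * pmc G' univ := by
  have ht : ∀ᶠ n : ℕ in Filter.atTop, (n : ℝ) * (3 / 5) ^ n < 1 / 6 :=
    (tendsto_self_mul_const_pow_of_lt_one (by norm_num) (by norm_num)).eventually_lt_const (by norm_num)
  obtain ⟨n1, hn1⟩ := Filter.eventually_atTop.1 ht
  refine ⟨2 * 176128 + 4, by norm_num, max n1 200000, ?_⟩
  intro n hn hev j hj G G' hG hG'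
  have hnn1 : n1 ≤ n := (le_max_left _ _).trans hn
  have hn2 : 200000 ≤ n := (le_max_right _ _).trans hn
  have hjn : 1000 * j ≤ n := by
    by_contra hcon
    push Not at hcon
    have h1 : j * j ^ 2 < j * 1000 := by nlinarith
    have h2 : j ^ 2 < 1000 := lt_of_mul_lt_mul_left h1 (Nat.zero_le _)
    have : j < 32 := by nlinarith
    omega
  have hnR : (200000 : ℝ) ≤ n := by exact_mod_cast hn2
  have hjR : 1000 * (j : ℝ) ≤ n := by exact_mod_cast hjn
  have hj3 : (j : ℝ) ^ 3 ≤ n := by exact_mod_cast hj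
  have hj0 : (0 : ℝ) ≤ j := by positivity
  have hn0 : (0 : ℝ) < n := by linarith
  set s := √(n : ℝ) with hs
  have hs2 : s ^ 2 = n := Real.sq_sqrt hn0.le
  have hs200 : 200 ≤ s := Real.le_sqrt_of_sq_le (by norm_num; linarith)
  have hs0 : 0 < s := by linarith
  set E := Real.exp (176128 / n) with hE
  set M := (3 / 10 * s) ^ n with hM
  have hM0 : 0 < M := by positivity
  have hE0 : 0 < E := Real.exp_pos _
  -- small arguments
  have small : ∀ H : SimpleGraph (Fin n), DegEq H j → ∀ x : ℝ, |x| ≤ s / 4 → |ev H x univ| ≤ M := by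
    intro H hH x hx
    refine (ev_abs hH.le (by positivity) hx n univ (by simp)).trans ?_
    refine pow_le_pow_left₀ (by positivity) ?_ n
    have : (j : ℝ) / (s / 4) ≤ s * (1 / 20) := by
      rw [div_le_iff₀ (by positivity)]; nlinarith
    linarith
  -- large arguments
  have large : ∀ x : ℝ, s / 4 ≤ |x| → 0 < |x| ∧ 16 * (j : ℝ) ≤ |x| ^ 2 := by
    intro x hx
    refine ⟨by linarith, ?_⟩
    nlinarith
  have posl : ∀ H : SimpleGraph (Fin n), DegEq H j → ∀ x : ℝ, s / 4 ≤ |x| → 0 < ev H x univ := by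
    intro H hH x hx
    obtain ⟨h1, h2⟩ := large x hx
    rw [ev_abs_arg hev]
    exact (ev_pos hH.le h1 (by linarith) _ _ rfl).1
  have cmp : ∀ x : ℝ, s / 4 ≤ |x| → ev G x univ ≤ E * ev G' x univ := by
    intro x hx
    obtain ⟨h1, h2⟩ := large x hx
    have p := posl G' hG' x hx
    rw [ev_abs_arg hev G', ev_abs_arg hev G] at *
    refine (ev_compare hG' hG h1 h2).trans (mul_le_mul_of_nonneg_right ?_ p.le)
    rw [hE, Real.exp_le_exp, Fintype.card_fin, div_le_div_iff₀ (by positivity) hn0]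
    have h6 : (s / 4) ^ 6 ≤ |x| ^ 6 := pow_le_pow_left₀ (by positivity) hx 6
    have e6 : (s / 4) ^ 6 = n ^ 3 / 4096 := by rw [← hs2]; ring
    rw [e6] at h6
    have : 43 * (n : ℝ) * j ^ 3 * n ≤ 43 * n * n * n := by
      have := mul_le_mul_of_nonneg_left hj3 (by positivity : (0 : ℝ) ≤ 43 * n * n)
      linarith
    calc 43 * (n : ℝ) * j ^ 3 * n ≤ 43 * n * n * n := this
      _ = 176128 * (n ^ 3 / 4096) := by ring
      _ ≤ _ := by linarith
  -- global pointwise bound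
  have hI : gl (mp G univ) ≤ E * gl (mp G' univ) + ((1 + E) * M) * √(2 * Real.pi) := by
    rw [← gl_affine]
    refine gl_mono fun x => ?_
    simp only [eval_add, eval_mul, eval_C]
    change ev G x univ ≤ E * ev G' x univ + (1 + E) * M
    rcases le_total |x| (s / 4) with hx | hx
    · have a1 := abs_le.1 (small G hG x hx)
      have a2 := abs_le.1 (small G' hG' x hx)
      have := mul_le_mul_of_nonneg_left a2.1 hE0.le
      linarith [a1.2]
    · have := cmp x hx
      have : 0 ≤ (1 + E) * M := by positivity
      linarith
  have hexp : (5 / 9 : ℝ) ≤ Real.exp (-(11/20)) := by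
    have h1 : (189 / 200 : ℝ) ≤ Real.exp (-(11/200)) := by
      have := Real.add_one_le_exp (-(11/200) : ℝ); linarith
    have h2 : Real.exp (-(11/20)) = Real.exp (-(11/200)) ^ 10 := by
      rw [← Real.exp_nat_mul]; norm_num
    rw [h2]
    refine le_trans ?_ (pow_le_pow_left₀ (by norm_num) h1 10)
    norm_num
  have hL : (1 / 2 * s) ^ n ≤ gl (mp G' univ) + M * √(2 * Real.pi) := by
    have h1 := gl_affine (mp G' univ) 1 M
    rw [one_mul] at h1
    rw [← h1]
    have h2 : (1 / 2 * s) ^ n = (9 / 10 * s) ^ n * (5 / 9) ^ n := by rw [← mul_pow]; congr 1; ring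
    rw [h2]
    refine gl_lower (s := s) ?_ (by positivity) (by positivity) ?_
    · intro x
      simp only [eval_add, eval_mul, eval_C, one_mul]
      change 0 ≤ ev G' x univ + M
      rcases le_total |x| (s / 4) with hx | hx
      · linarith [(abs_le.1 (small G' hG' x hx)).1]
      · linarith [posl G' hG' x hx]
    · intro x hx
      have hx0 : 0 < x := by linarith [hx.1]
      simp only [eval_add, eval_mul, eval_C, one_mul]
      change _ ≤ ev G' x univ + M ∧ _
      constructor
      · have b := (ev_bounds hG'.le hx0 (by nlinarith [hx.1]) n univ (by simp)).1
        have : (9 / 10 * s) ^ n ≤ (x - 2 * j / x) ^ n := by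
          refine pow_le_pow_left₀ (by positivity) ?_ n
          have : 2 * j / x ≤ 1 / 10 * s := by
            rw [div_le_iff₀ hx0]; nlinarith [hx.1]
          linarith [hx.1]
        linarith
      · refine (pow_le_pow_left₀ (by norm_num) hexp n).trans ?_
        rw [← Real.exp_nat_mul, Real.exp_le_exp]
        have : x ^ 2 ≤ (s + 1) ^ 2 := pow_le_pow_left₀ hx0.le hx.2 2
        nlinarith
  have hpi : √(2 * Real.pi) ≤ 3 := by
    rw [Real.sqrt_le_left (by norm_num)]
    linarith [Real.pi_lt_d2]
  have hc0 : 0 < √(2 * Real.pi) := by positivity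
  have hMq : M * √(2 * Real.pi) ≤ (1 / 2 * s) ^ n / (2 * n) := by
    have h1 : M = (1 / 2 * s) ^ n * (3 / 5) ^ n := by rw [← mul_pow, hM]; congr 1; ring
    have h2 := hn1 n hnn1
    rw [le_div_iff₀ (by positivity)]
    have hq : 0 < (1 / 2 * s) ^ n := by positivity
    calc M * √(2 * Real.pi) * (2 * n) ≤ M * 3 * (2 * n) := by gcongr
      _ = (1 / 2 * s) ^ n * (6 * (n * (3 / 5) ^ n)) := by rw [h1]; ring
      _ ≤ (1 / 2 * s) ^ n * 1 := by
        refine mul_le_mul_of_nonneg_left ?_ hq.le; linarith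
      _ = _ := mul_one _
  set q := (1 / 2 * s) ^ n with hq
  have hq0 : 0 < q := by positivity
  set I' := gl (mp G' univ) with hI'
  have hqn : q / (2 * n) ≤ q / 2 := by
    refine div_le_div_of_nonneg_left hq0.le (by norm_num) (by linarith)
  have hI'q : q / 2 ≤ I' := by linarith
  have hI'0 : 0 < I' := by linarith
  have hMI : M * √(2 * Real.pi) ≤ I' / n := by
    refine hMq.trans ?_
    rw [← div_div]
    gcongr
  have hE1 : E ≤ 1 + 2 * (176128 / n) := by
    have h1 : (176128 : ℝ) / n ≤ 1 := by rw [div_le_one hn0]; linarith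
    have h2 : 0 ≤ (176128 : ℝ) / n := by positivity
    have := Real.abs_exp_sub_one_le (x := (176128 : ℝ) / n) (by rw [abs_of_nonneg h2]; exact h1)
    rw [abs_of_nonneg h2] at this
    linarith [(abs_le.1 this).2]
  have hE3 : E ≤ 3 := by
    have h1 : (176128 : ℝ) / n ≤ 1 := by rw [div_le_one hn0]; linarith
    linarith
  have fin : gl (mp G univ) ≤ (1 + (2 * 176128 + 4) / n) * I' := by
    calc gl (mp G univ) ≤ E * I' + (1 + E) * (M * √(2 * Real.pi)) := by linarith
      _ ≤ (1 + 2 * (176128 / n)) * I' + 4 * (I' / n) := by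
        refine add_le_add (mul_le_mul_of_nonneg_right hE1 hI'0.le) ?_
        exact mul_le_mul (by linarith) hMI (by positivity) (by norm_num)
      _ = _ := by ring
  rw [hI', gl_mp G' _ _ rfl] at fin hI'0
  rw [gl_mp G _ _ rfl] at fin
  refine ⟨(mul_pos_iff_of_pos_left hc0).1 hI'0, ?_⟩
  refine le_of_mul_le_mul_left ?_ hc0
  linarith
end

section
open Finset

open Classical in
noncomputable def tf (n d : ℕ) (A : (Fin d → SimpleGraph (Fin n)) → Prop) :
    Finset (Fin d → SimpleGraph (Fin n)) :=
  Finset.univ.filter (fun M => IsPMTuple M ∧ A M)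

lemma mem_tf {n d : ℕ} {A : (Fin d → SimpleGraph (Fin n)) → Prop} {M : Fin d → SimpleGraph (Fin n)} :
    M ∈ tf n d A ↔ IsPMTuple M ∧ A M := by
  simp [tf]

lemma tupleProb_eq (n d : ℕ) (A : (Fin d → SimpleGraph (Fin n)) → Prop) :
    tupleProb n d A = ((tf n d A).card : ℝ) / ((tf n d fun _ => True).card : ℝ) := by
  rw [tupleProb, tf, tf]
  congr 3
  ext M
  simp only [Finset.mem_filter, and_true]

lemma card_one_iff {n : ℕ} (M : SimpleGraph (Fin n)) (v : Fin n) :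
    Nat.card (M.neighborSet v) = 1 ↔ ∃! w, M.Adj v w := by
  rw [Nat.card_eq_one_iff_unique]
  constructor
  · rintro ⟨h1, ⟨w, hw⟩⟩
    refine ⟨w, hw, fun y hy => ?_⟩
    have := h1.elim ⟨y, hy⟩ ⟨w, hw⟩
    exact congrArg Subtype.val this
  · rintro ⟨w, hw, hu⟩
    refine ⟨⟨?_⟩, ⟨w, hw⟩⟩
    rintro ⟨a, ha⟩ ⟨b, hb⟩
    exact Subtype.ext ((hu a ha).trans (hu b hb).symm)

lemma disj_iff {V : Type*} (M N : SimpleGraph V) : Disjoint M N ↔ ∀ v w, M.Adj v w → ¬ N.Adj v w := by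
  rw [disjoint_iff_inf_le]
  constructor
  · intro h v w h1 h2
    exact h (show (M ⊓ N).Adj v w from ⟨h1, h2⟩)
  · intro h v w hvw
    exact h v w hvw.1 hvw.2

lemma degEq_iSup {n k : ℕ} {H : Fin k → SimpleGraph (Fin n)} (hH : IsPMTuple H) :
    DegEq (⨆ i, H i) k := by
  classical
  intro v
  have h1 : ∀ i, ∃! w, (H i).Adj v w := fun i => (card_one_iff _ _).1 (hH.1 i v)
  choose f hf hu using h1
  have : Finset.univ.filter ((⨆ i, H i).Adj v) = Finset.univ.image f := by
    ext w
    simp only [Finset.mem_filter, Finset.mem_univ, true_and, Finset.mem_image, SimpleGraph.iSup_adj]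
    constructor
    · rintro ⟨i, hi⟩; exact ⟨i, (hu i w hi).symm⟩
    · rintro ⟨i, rfl⟩; exact ⟨i, hf i⟩
  rw [this, Finset.card_image_of_injective, Finset.card_univ, Fintype.card_fin]
  intro a b hab
  by_contra hne
  exact (disj_iff _ _).1 (hH.2 a b hne) v (f a) (hf a) (hab ▸ hf b)

lemma isPM_snoc {n k : ℕ} (M : Fin (k + 1) → SimpleGraph (Fin n)) :
    IsPMTuple M ↔ IsPMTuple (fun i : Fin k => M i.castSucc) ∧
      IsPM (⨆ i : Fin k, M i.castSucc) univ (M (Fin.last k)) := by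
  constructor
  · intro h
    refine ⟨⟨fun i => h.1 _, fun i j hij => h.2 _ _ (by simpa using hij)⟩, fun v _ => (card_one_iff _ _).1 (h.1 _ v),
      by simp, ?_⟩
    intro v w hvw
    rw [SimpleGraph.iSup_adj]
    rintro ⟨i, hi⟩
    exact (disj_iff _ _).1 (h.2 i.castSucc (Fin.last k) (Fin.castSucc_lt_last i).ne) v w hi hvw
  · rintro ⟨h1, h2, -, h3⟩
    have h4 : ∀ i : Fin k, Disjoint (M i.castSucc) (M (Fin.last k)) := by
      intro i
      rw [disj_iff]
      intro v w hi hl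
      refine h3 v w hl ?_
      rw [SimpleGraph.iSup_adj]; exact ⟨i, hi⟩
    refine ⟨fun i v => ?_, fun i j hij => ?_⟩
    · induction i using Fin.lastCases with
      | last => exact (card_one_iff _ _).2 (h2 v (Finset.mem_univ _))
      | cast i => exact h1.1 i v
    · induction i using Fin.lastCases with
      | last =>
        induction j using Fin.lastCases with
        | last => exact absurd rfl hij
        | cast j => exact (h4 j).symm
      | cast i =>
        induction j using Fin.lastCases with
        | last => exact h4 i
        | cast j => exact h1.2 i j (by simpa using hij)

lemma card_tf_succ (n k : ℕ) (A : (Fin k → SimpleGraph (Fin n)) → Prop) :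
    (tf n (k + 1) (fun M => A (fun i => M i.castSucc))).card =
      ∑ H ∈ tf n k A, pmc (⨆ i, H i) univ := by
  classical
  rw [Finset.card_eq_sum_card_fiberwise (f := fun M => fun i : Fin k => M i.castSucc) (t := tf n k A)]
  · refine Finset.sum_congr rfl fun H hH => ?_
    rw [mem_tf] at hH
    rw [pmc]
    refine Finset.card_nbij' (fun M => M (Fin.last k)) (fun N => Fin.snoc (α := fun _ => SimpleGraph (Fin n)) H N)
      ?_ ?_ ?_ ?_
    · intro M hM
      simp only [Finset.coe_filter, Set.mem_ofPred_eq, mem_tf, Finset.mem_univ, true_and] at hM ⊢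
      obtain ⟨⟨h1, -⟩, rfl⟩ := hM
      exact ((isPM_snoc M).1 h1).2
    · intro N hN
      simp only [Finset.coe_filter, Set.mem_ofPred_eq, mem_tf, Finset.mem_univ, true_and] at hN ⊢
      rw [isPM_snoc]
      simp only [Fin.snoc_castSucc, Fin.snoc_last]
      exact ⟨⟨⟨hH.1, hN⟩, hH.2⟩, trivial⟩
    · intro M hM
      simp only [Finset.coe_filter, Set.mem_ofPred_eq] at hM
      obtain ⟨-, rfl⟩ := hM
      exact Fin.snoc_init_self M
    · intro N _
      simp
  · intro M hM
    simp only [Finset.mem_coe, mem_tf] at hM ⊢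
    exact ⟨((isPM_snoc M).1 hM.1).1, hM.2⟩

lemma avg_compare {α : Type*} {F FA : Finset α} (hsub : FA ⊆ F) {w : α → ℝ} {q : ℝ}
    (hw : ∀ a ∈ F, 0 < w a) (hF : F.Nonempty)
    (h : ∀ a ∈ F, ∀ b ∈ F, w a ≤ q * w b) :
    (∑ a ∈ FA, w a) / (∑ a ∈ F, w a) ≤ q * (FA.card / F.card) ∧
      (FA.card / F.card : ℝ) ≤ q * ((∑ a ∈ FA, w a) / (∑ a ∈ F, w a)) := by
  have hS : 0 < ∑ a ∈ F, w a := Finset.sum_pos hw hF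
  have hc : (0 : ℝ) < F.card := by exact_mod_cast Finset.card_pos.2 hF
  constructor
  · rw [← mul_div_assoc, div_le_div_iff₀ hS hc]
    have : ∑ a ∈ FA, ∑ b ∈ F, w a ≤ ∑ a ∈ FA, ∑ b ∈ F, q * w b :=
      Finset.sum_le_sum fun a ha => Finset.sum_le_sum fun b hb => h a (hsub ha) b hb
    simp only [Finset.sum_const, nsmul_eq_mul, ← Finset.mul_sum] at this
    linarith
  · rw [← mul_div_assoc, div_le_div_iff₀ hc hS]
    have : ∑ a ∈ FA, ∑ b ∈ F, w b ≤ ∑ a ∈ FA, ∑ b ∈ F, q * w a :=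
      Finset.sum_le_sum fun a ha => Finset.sum_le_sum fun b hb => h b hb a (hsub ha)
    simp only [Finset.sum_const, nsmul_eq_mul, ← Finset.mul_sum] at this
    linarith

/-- hypothesis delivered by `key_count` for a fixed `n` -/
def Good (n : ℕ) (q : ℝ) : Prop := ∀ j : ℕ, j ^ 3 ≤ n →
    ∀ G G' : SimpleGraph (Fin n), DegEq G j → DegEq G' j →
      0 < (pmc G' univ : ℝ) ∧ (pmc G univ : ℝ) ≤ q * pmc G' univ

lemma tf_pos {n : ℕ} {q : ℝ} (hg : Good n q) : ∀ d : ℕ, d ^ 3 ≤ n → (tf n d fun _ => True).Nonempty := by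
  intro d
  induction d with
  | zero =>
    intro _
    exact ⟨fun i => i.elim0, mem_tf.2 ⟨⟨fun i => i.elim0, fun i => i.elim0⟩, trivial⟩⟩
  | succ d ih =>
    intro h
    have hd : d ^ 3 ≤ n := (Nat.pow_le_pow_left (Nat.le_succ d) 3).trans h
    have := card_tf_succ n d (fun _ => True)
    rw [← Finset.card_pos, this]
    refine Finset.sum_pos (fun H hH => ?_) (ih hd)
    have hr := degEq_iSup (mem_tf.1 hH).1
    exact_mod_cast (hg d hd _ _ hr hr).1

lemma prob_step {n : ℕ} {q : ℝ} (hg : Good n q) {d : ℕ} (hd : d ^ 3 ≤ n)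
    (A : (Fin d → SimpleGraph (Fin n)) → Prop) :
    tupleProb n (d + 1) (fun M => A (fun i => M i.castSucc)) ≤ q * tupleProb n d A ∧
    tupleProb n d A ≤ q * tupleProb n (d + 1) (fun M => A (fun i => M i.castSucc)) := by
  have h1 := card_tf_succ n d (fun _ => True)
  have h2 := card_tf_succ n d A
  rw [tupleProb_eq, tupleProb_eq, h1, h2]
  push_cast
  refine avg_compare ?_ ?_ (tf_pos hg d hd) ?_
  · intro M hM; rw [mem_tf] at hM ⊢; exact ⟨hM.1, trivial⟩
  · intro H hH
    have hr := degEq_iSup (mem_tf.1 hH).1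
    exact (hg d hd _ _ hr hr).1
  · intro H hH H' hH'
    exact (hg d hd _ _ (degEq_iSup (mem_tf.1 hH).1) (degEq_iSup (mem_tf.1 hH').1)).2

lemma prob_chain {n : ℕ} {q : ℝ} (hq : 1 ≤ q) (hg : Good n q) {k : ℕ}
    (A : (Fin k → SimpleGraph (Fin n)) → Prop) : ∀ d : ℕ, ∀ h : k ≤ d, d ^ 3 ≤ n →
    tupleProb n d (fun M => A (fun i => M (Fin.castLE h i))) ≤ q ^ d * tupleProb n k A ∧
    tupleProb n k A ≤ q ^ d * tupleProb n d (fun M => A (fun i => M (Fin.castLE h i))) := by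
  have hp : ∀ d A, 0 ≤ tupleProb n d A := fun d A => by rw [tupleProb]; positivity
  intro d h
  induction d, h using Nat.le_induction with
  | base =>
    intro _
    have : ∀ p : ℝ, 0 ≤ p → p ≤ q ^ k * p := fun p h0 => le_mul_of_one_le_left h0 (one_le_pow₀ hq)
    exact ⟨this _ (hp _ _), this _ (hp _ _)⟩
  | succ d h ih =>
    intro h3
    have hd : d ^ 3 ≤ n := (Nat.pow_le_pow_left (Nat.le_succ d) 3).trans h3
    obtain ⟨i1, i2⟩ := ih hd
    obtain ⟨s1, s2⟩ := prob_step hg hd (fun M => A (fun i => M (Fin.castLE h i)))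
    have hq0 : 0 ≤ q := by linarith
    constructor
    · refine s1.trans ?_
      rw [pow_succ', mul_assoc]
      exact mul_le_mul_of_nonneg_left i1 hq0
    · refine i2.trans ?_
      rw [pow_succ, mul_assoc]
      exact mul_le_mul_of_nonneg_left s2 (by positivity)

lemma isPM_comp {n d k : ℕ} {M : Fin d → SimpleGraph (Fin n)} (h : IsPMTuple M) {f : Fin k → Fin d}
    (hf : Function.Injective f) : IsPMTuple (fun i => M (f i)) :=
  ⟨fun i => h.1 _, fun i j hij => h.2 _ _ (hf.ne hij)⟩

lemma prob_perm {n d k : ℕ} (h : k ≤ d) (ι : Fin k → Fin d) (hι : Function.Injective ι)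
    (A : (Fin k → SimpleGraph (Fin n)) → Prop) :
    tupleProb n d (fun M => A (fun j => M (ι j))) =
      tupleProb n d (fun M => A (fun i => M (Fin.castLE h i))) := by
  classical
  have hc : Function.Injective (Fin.castLE h) := Fin.castLE_injective h
  set e0 : {x // x ∈ Set.range (Fin.castLE h)} ≃ {x // x ∈ Set.range ι} :=
    (Equiv.ofInjective _ hc).symm.trans (Equiv.ofInjective _ hι) with he0
  set e := e0.extendSubtype with he
  have hee : ∀ i, e (Fin.castLE h i) = ι i := by
    intro i
    rw [he, Equiv.extendSubtype_apply_of_mem _ _ ⟨i, rfl⟩]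
    have : (⟨Fin.castLE h i, ⟨i, rfl⟩⟩ : {x // x ∈ Set.range (Fin.castLE h)}) = Equiv.ofInjective _ hc i := rfl
    rw [this, he0]
    simp
  rw [tupleProb_eq, tupleProb_eq]
  congr 2
  refine Finset.card_nbij' (fun M i => M (e i)) (fun M i => M (e.symm i)) ?_ ?_ ?_ ?_
  · intro M hM
    simp only [Finset.mem_coe, mem_tf] at hM ⊢
    refine ⟨isPM_comp hM.1 e.injective, ?_⟩
    simp only [hee]; exact hM.2
  · intro M hM
    simp only [Finset.mem_coe, mem_tf] at hM ⊢
    refine ⟨isPM_comp hM.1 e.symm.injective, ?_⟩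
    simp only [← hee, Equiv.symm_apply_apply]; exact hM.2
  · intro M _; funext i; simp
  · intro M _; funext i; simp

lemma prob_small {n d k : ℕ} (hd : d ≤ n - 1) (hk : k ≤ d) (ι : Fin k → Fin d) (hι : Function.Injective ι)
    (A : (Fin k → SimpleGraph (Fin n)) → Prop) :
    tupleProb n d (fun M => A (fun j => M (ι j))) ≤
      (Fintype.card (SimpleGraph (Fin n)) : ℝ) ^ n * tupleProb n k A := by
  classical
  rw [tupleProb_eq, tupleProb_eq]
  rcases (tf n d fun M => A (fun j => M (ι j))).eq_empty_or_nonempty with h0 | ⟨M, hM⟩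
  · rw [h0, Finset.card_empty, Nat.cast_zero, zero_div]; positivity
  have hM' : (fun j => M (ι j)) ∈ tf n k A := by
    rw [mem_tf] at hM ⊢
    exact ⟨isPM_comp hM.1 hι, hM.2⟩
  have l1 : ((tf n d fun M => A (fun j => M (ι j))).card : ℝ) / ((tf n d fun _ => True).card : ℝ) ≤ 1 := by
    refine div_le_one_of_le₀ ?_ (by positivity)
    have : tf n d (fun M => A (fun j => M (ι j))) ⊆ tf n d fun _ => True := by
      intro N hN; rw [mem_tf] at hN ⊢; exact ⟨hN.1, trivial⟩
    exact_mod_cast Finset.card_le_card this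
  refine l1.trans ?_
  have l2 : (1 : ℝ) ≤ (tf n k A).card := by exact_mod_cast Finset.card_pos.2 ⟨_, hM'⟩
  have l3 : (0 : ℝ) < (tf n k fun _ => True).card := by
    have : (fun j => M (ι j)) ∈ tf n k fun _ => True := by
      rw [mem_tf] at hM' ⊢; exact ⟨hM'.1, trivial⟩
    exact_mod_cast Finset.card_pos.2 ⟨_, this⟩
  have l4 : ((tf n k fun _ => True).card : ℝ) ≤ (Fintype.card (SimpleGraph (Fin n)) : ℝ) ^ n := by
    have h1 : (tf n k fun _ => True).card ≤ Fintype.card (SimpleGraph (Fin n)) ^ k := by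
      have := Finset.card_le_univ (tf n k fun _ => True)
      simpa using this
    have h2 : Fintype.card (SimpleGraph (Fin n)) ^ k ≤ Fintype.card (SimpleGraph (Fin n)) ^ n :=
      Nat.pow_le_pow_right Fintype.card_pos (by omega)
    exact_mod_cast h1.trans h2
  rw [← mul_div_assoc, le_div_iff₀ l3, one_mul]
  nlinarith
end

/-- There is a sequence `ε_n → 0` such that for every even `n`, every `4 ≤ d ≤ n-1` with
`d³ ≤ n`, every `1 ≤ k ≤ d` and every strictly increasing choice of `k` colours
`ι : Fin k → Fin d`, and every family `A` of `k`-tuples of perfect matchings, the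
probability that the selected colours of `G''(n,d)` lie in `A` is within a factor
`1 ± ε_n` of the probability that `G''(n,k)` lies in `A`. -/
theorem stmt8 :
    ∃ ε : ℕ → ℝ, Filter.Tendsto ε Filter.atTop (nhds 0) ∧
      ∀ n d k : ℕ, Even n → 4 ≤ d → d ≤ n - 1 → d ^ 3 ≤ n → 1 ≤ k → k ≤ d →
        ∀ ι : Fin k → Fin d, StrictMono ι →
          ∀ A : (Fin k → SimpleGraph (Fin n)) → Prop,
            (1 - ε n) * tupleProb n k A ≤
                tupleProb n d (fun M => A (fun j => M (ι j))) ∧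
              tupleProb n d (fun M => A (fun j => M (ι j))) ≤
                (1 + ε n) * tupleProb n k A := by
  obtain ⟨C, hC, n0, hkey⟩ := key_count
  have hp : ∀ n d A, 0 ≤ tupleProb n d A := fun n d A => by rw [tupleProb]; positivity
  refine ⟨fun n => if n0 ≤ n then Real.exp (C / √(n : ℝ)) - 1
    else (Fintype.card (SimpleGraph (Fin n)) : ℝ) ^ n, ?_, ?_⟩
  · have t : Filter.Tendsto (fun n : ℕ => Real.exp (C / √(n : ℝ)) - 1) Filter.atTop (nhds 0) := by
      have t1 : Filter.Tendsto (fun n : ℕ => C / √(n : ℝ)) Filter.atTop (nhds 0) :=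
        Filter.Tendsto.div_atTop tendsto_const_nhds
          (Real.tendsto_sqrt_atTop.comp tendsto_natCast_atTop_atTop)
      have t2 := ((Real.continuous_exp.tendsto 0).comp t1).sub_const 1
      simpa using t2
    refine t.congr' ?_
    filter_upwards [Filter.eventually_ge_atTop n0] with n hn
    simp [hn]
  · intro n d k hev hd4 hdn hd3 hk1 hkd ι hι A
    by_cases hn : n0 ≤ n
    · simp only [hn, if_true]
      have hn0 : (0 : ℝ) < n := by
        have : 0 < n := lt_of_lt_of_le (by positivity) hd3
        exact_mod_cast this
      have hg : Good n (1 + C / n) := fun j hj G G' hG hG' => hkey n hn hev j hj G G' hG hG'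
      have hq : 1 ≤ 1 + C / (n : ℝ) := by
        have : 0 < C / (n : ℝ) := by positivity
        linarith
      obtain ⟨c1, c2⟩ := prob_chain hq hg A d hkd hd3
      rw [← prob_perm hkd ι hι.injective A] at c1 c2
      set p := tupleProb n d (fun M => A (fun j => M (ι j)))
      set p0 := tupleProb n k A
      have hp1 : 0 ≤ p := hp _ _ _
      have hp0 : 0 ≤ p0 := hp _ _ _
      set Q := Real.exp (C / √(n : ℝ)) with hQ
      have hQq : (1 + C / (n : ℝ)) ^ d ≤ Q := by
        have h1 : 1 + C / (n : ℝ) ≤ Real.exp (C / n) := by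
          have := Real.add_one_le_exp (C / (n : ℝ)); linarith
        refine (pow_le_pow_left₀ (by positivity) h1 d).trans ?_
        rw [← Real.exp_nat_mul, hQ, Real.exp_le_exp]
        have h2 : (d : ℝ) ≤ √(n : ℝ) := by
          apply Real.le_sqrt_of_sq_le
          have : d ^ 2 ≤ n := (Nat.pow_le_pow_right (by omega) (by norm_num)).trans hd3
          exact_mod_cast this
        have hs : 0 < √(n : ℝ) := Real.sqrt_pos.2 hn0
        have h3 : C / √(n : ℝ) = √(n : ℝ) * (C / n) := by
          have : (n : ℝ) = √(n : ℝ) * √(n : ℝ) := (Real.mul_self_sqrt hn0.le).symm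
          nth_rw 3 [this]
          field_simp
        rw [h3]
        exact mul_le_mul_of_nonneg_right h2 (by positivity)
      have hQ0 : 0 < Q := Real.exp_pos _
      have c1' : p ≤ Q * p0 := c1.trans (mul_le_mul_of_nonneg_right hQq hp0)
      have c2' : p0 ≤ Q * p := c2.trans (mul_le_mul_of_nonneg_right hQq hp1)
      constructor
      · rcases le_total Q 2 with h | h
        · have h1 : (2 - Q) * p0 ≤ (2 - Q) * (Q * p) := mul_le_mul_of_nonneg_left c2' (by linarith)
          have h2 : (2 - Q) * Q ≤ 1 := by nlinarith [sq_nonneg (Q - 1)]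
          have h3 := mul_le_mul_of_nonneg_right h2 hp1
          linarith
        · have : (1 - (Q - 1)) * p0 ≤ 0 := mul_nonpos_of_nonpos_of_nonneg (by linarith) hp0
          linarith
      · linarith
    · simp only [hn, if_false]
      have h1 := prob_small hdn hkd ι hι.injective A
      have hc : (1 : ℝ) ≤ (Fintype.card (SimpleGraph (Fin n)) : ℝ) ^ n :=
        one_le_pow₀ (by exact_mod_cast Fintype.card_pos)
      have h2 := hp n k A
      have h3 := hp n d (fun M => A (fun j => M (ι j)))
      constructor
      · have := mul_nonpos_of_nonpos_of_nonneg (sub_nonpos.2 hc) h2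
        linarith
      · linarith
end

section
/- There exists a sequence ε_n → 0 such that the following holds for every even n and every integer d with 4 ≤ d ≤ n-1 and d³ ≤ n, where k = ⌊d/4⌋. Sample (M_1,…,M_d) = G''(n,d). Fix i ∈ {1,…,k}, fix perfect matchings N_c for every colour c ∈ {4j-3, 4j-2, 4j-1 : j ∈ [k]}, fix t ∈ [1, n/4] and a matching M' of t edges, all of these pairwise edge-disjoint, such that the event E = { M_c = N_c for every fixed colour c, and M' ⊆ M_{4i} } has positive probability. Then for every pair of vertices u, v not covered by M' such that uv is not an edge of any N_c or of M', one has |P( uv ∈ M_{4i} | E ) − 1/(n-2t)| ≤ ε_n/(n-2t). -/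
/-- The colour `c ∈ Fin d` (0-indexed) is one of the "fixed" colours, i.e. one of the
colours `4j-3, 4j-2, 4j-1` (1-indexed) with `j ∈ [⌊d/4⌋]`: all colours of the first
`⌊d/4⌋` groups of four except the matching colours `4j`. -/
def FixedColour (d : ℕ) (c : Fin d) : Prop :=
  c.val < 4 * (d / 4) ∧ c.val % 4 ≠ 3

open Classical in
/-- Conditional probability, for the uniformly random tuple `G''(n,d)`, of the event `B`
given the event `E`. -/
noncomputable def tupleCondProb (n d : ℕ)
    (E B : (Fin d → SimpleGraph (Fin n)) → Prop) : ℝ :=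
  ((Finset.univ.filter (fun M : Fin d → SimpleGraph (Fin n) =>
      IsPMTuple M ∧ E M ∧ B M)).card : ℝ) /
  ((Finset.univ.filter (fun M : Fin d → SimpleGraph (Fin n) =>
      IsPMTuple M ∧ E M)).card : ℝ)

section Switching
open Classical Finset

variable {V : Type} [Fintype V]

/-- Perfect matching as a graph. -/
def SwPM (g : SimpleGraph V) : Prop := ∀ v, ∃ w, g.Adj v w ∧ ∀ x, g.Adj v x → x = w

/-- Relabelling by a transposition. -/
noncomputable def swRel (a b : V) (g : SimpleGraph V) : SimpleGraph V := g.comap (Equiv.swap a b)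

/-- Partner of a vertex. -/
noncomputable def swPt (g : SimpleGraph V) (w : V) : V :=
  if h : ∃ x, g.Adj w x then h.choose else w

/-- Perfect matchings containing `M'` and avoiding `H`. -/
noncomputable def swX (H M' : SimpleGraph V) : Finset (SimpleGraph V) :=
  univ.filter (fun g => SwPM g ∧ M' ≤ g ∧ Disjoint g H)

/-- Vertices not covered by `M'`. -/
noncomputable def swU (M' : SimpleGraph V) : Finset V :=
  univ.filter (fun w => ∀ x, ¬ M'.Adj w x)

/-- Neighbours. -/
noncomputable def swN (H : SimpleGraph V) (w : V) : Finset V := univ.filter (fun x => H.Adj w x)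

theorem swRel_adj (a b x y : V) (g : SimpleGraph V) :
    (swRel a b g).Adj x y ↔ g.Adj (Equiv.swap a b x) (Equiv.swap a b y) := Iff.rfl

theorem swRel_swRel (a b : V) (g : SimpleGraph V) : swRel a b (swRel a b g) = g := by
  ext x y
  simp [swRel_adj]

theorem swPt_adj {g : SimpleGraph V} (hg : SwPM g) (w : V) : g.Adj w (swPt g w) := by
  obtain ⟨x, hx, -⟩ := hg w
  have h : ∃ x, g.Adj w x := ⟨x, hx⟩
  simp only [swPt, dif_pos h]
  exact h.choose_spec

theorem swPt_eq {g : SimpleGraph V} (hg : SwPM g) {w x : V} (h : g.Adj w x) : swPt g w = x := by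
  obtain ⟨z, hz, hu⟩ := hg w
  rw [hu _ h, hu _ (swPt_adj hg w)]

theorem swPt_pt {g : SimpleGraph V} (hg : SwPM g) (w : V) : swPt g (swPt g w) = w :=
  swPt_eq hg (swPt_adj hg w).symm

theorem swPt_inj {g : SimpleGraph V} (hg : SwPM g) : Function.Injective (swPt g) :=
  fun a b h => by rw [← swPt_pt hg a, h, swPt_pt hg b]

theorem swRel_pm (a b : V) {g : SimpleGraph V} (hg : SwPM g) : SwPM (swRel a b g) := by
  intro v
  obtain ⟨w, hw, hu⟩ := hg (Equiv.swap a b v)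
  refine ⟨Equiv.swap a b w, ?_, ?_⟩
  · rw [swRel_adj]; simpa using hw
  · intro x hx
    rw [swRel_adj] at hx
    rw [← hu _ hx]; simp

theorem mem_swX {H M' g : SimpleGraph V} :
    g ∈ swX H M' ↔ SwPM g ∧ M' ≤ g ∧ ∀ x y, g.Adj x y → ¬ H.Adj x y := by
  simp only [swX, mem_filter, mem_univ, true_and]
  have : Disjoint g H ↔ ∀ x y, g.Adj x y → ¬ H.Adj x y := by
    rw [SimpleGraph.disjoint_left]
  rw [this]

theorem mem_swU {M' : SimpleGraph V} {w : V} : w ∈ swU M' ↔ ∀ x, ¬ M'.Adj w x := by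
  simp [swU]

theorem mem_swN {H : SimpleGraph V} {w x : V} : x ∈ swN H w ↔ H.Adj w x := by
  simp [swN]

theorem swPt_mem_U {H M' g : SimpleGraph V} (hg : g ∈ swX H M') {w : V} (hw : w ∈ swU M') :
    swPt g w ∈ swU M' := by
  rw [mem_swX] at hg
  rw [mem_swU] at *
  intro x hx
  have h1 := hg.2.1 hx
  have h2 := swPt_eq hg.1 h1
  rw [swPt_pt hg.1] at h2
  subst h2
  exact hw _ hx.symm

theorem swRel_mem {H M' g : SimpleGraph V} (hg : g ∈ swX H M') {a b : V}
    (ha : a ∈ swU M') (hb : b ∈ swU M') (hab : ¬ g.Adj a b)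
    (h1 : ∀ y, g.Adj b y → ¬ H.Adj a y) (h2 : ∀ y, g.Adj a y → ¬ H.Adj b y) :
    swRel a b g ∈ swX H M' := by
  rw [mem_swX] at *
  rw [mem_swU] at ha hb
  refine ⟨swRel_pm _ _ hg.1, ?_, ?_⟩
  · intro x y hxy
    rw [swRel_adj]
    have hxa : x ≠ a := fun h => ha _ (h ▸ hxy)
    have hxb : x ≠ b := fun h => hb _ (h ▸ hxy)
    have hya : y ≠ a := fun h => ha _ (h ▸ hxy.symm)
    have hyb : y ≠ b := fun h => hb _ (h ▸ hxy.symm)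
    rw [Equiv.swap_apply_of_ne_of_ne hxa hxb, Equiv.swap_apply_of_ne_of_ne hya hyb]
    exact hg.2.1 hxy
  · intro x y hxy hH
    rw [swRel_adj] at hxy
    have hne := hH.ne
    have h3 := hg.2.2 x y
    have hab' : ¬ g.Adj b a := fun h => hab h.symm
    have hs := hH.symm
    have hs2 := hxy.symm
    simp only [Equiv.swap_apply_def] at hxy hs2
    split_ifs at hxy hs2 <;> grind

theorem sw_badcard {H g : SimpleGraph V} (hg : SwPM g) (w : V) {D : ℕ}
    (hD : ∀ w, (swN H w).card ≤ D) :
    (univ.filter (fun x => H.Adj w (swPt g x))).card ≤ D := by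
  refine le_trans (card_le_card_of_injOn (swPt g) ?_ (swPt_inj hg).injOn) (hD w)
  intro x hx
  simpa [mem_swN] using hx

theorem sw_good {H M' g : SimpleGraph V} (hg : SwPM g) (K : Finset V) (p q : V) {D : ℕ}
    (hD : ∀ w, (swN H w).card ≤ D) :
    (swU M').card ≤ ((swU M' \ K).filter
      (fun x => ¬ H.Adj p x ∧ ¬ H.Adj q (swPt g x))).card + K.card + 2 * D := by
  have hsub : swU M' ⊆ (swU M' \ K).filter
      (fun x => ¬ H.Adj p x ∧ ¬ H.Adj q (swPt g x)) ∪ K ∪ (swN H p ∪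
        univ.filter (fun x => H.Adj q (swPt g x))) := by
    intro x hx
    simp only [mem_union, mem_filter, mem_sdiff, mem_univ, true_and, mem_swN]
    tauto
  have h1 := card_le_card hsub
  have h2 := card_union_le ((swU M' \ K).filter
      (fun x => ¬ H.Adj p x ∧ ¬ H.Adj q (swPt g x)) ∪ K) (swN H p ∪
        univ.filter (fun x => H.Adj q (swPt g x)))
  have h3 := card_union_le ((swU M' \ K).filter
      (fun x => ¬ H.Adj p x ∧ ¬ H.Adj q (swPt g x))) K
  have h4 := card_union_le (swN H p) (univ.filter (fun x => H.Adj q (swPt g x)))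
  have h5 := hD p
  have h6 := sw_badcard hg q hD
  omega

theorem sw_upper {H M' : SimpleGraph V} {D : ℕ} (hD : ∀ w, (swN H w).card ≤ D) {u v : V}
    (huv : u ≠ v) (hu : u ∈ swU M') (hv : v ∈ swU M') :
    (((swU M').card : ℝ) - 1 - 2 * D) * (((swX H M').filter (fun g => g.Adj u v)).card : ℝ)
      ≤ ((swX H M').card : ℝ) := by
  set A := (swX H M').filter (fun g => g.Adj u v) with hA
  set B := (swX H M').filter (fun g => ¬ g.Adj u v) with hB
  let F : SimpleGraph V → Finset V := fun g => (swU M' \ {u, v}).filter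
      (fun x => ¬ H.Adj u x ∧ ¬ H.Adj v (swPt g x))
  have hcard : A.card + B.card = (swX H M').card := card_filter_add_card_filter_not _
  have hinj : (A.sigma F).card ≤ B.card := by
    refine card_le_card_of_injOn (fun p => swRel v p.2 p.1) ?_ ?_
    · rintro ⟨g, x⟩ hp
      simp only [hA, F, coe_sigma, Set.mem_sigma_iff, mem_coe, mem_filter, mem_sdiff, mem_insert,
        mem_singleton, not_or] at hp
      obtain ⟨⟨hg, hadj⟩, ⟨hx, hxu, hxv⟩, hux, hvx⟩ := hp
      have hpm := (mem_swX.1 hg).1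
      simp only [hB, coe_filter, Set.mem_ofPred_eq]
      refine ⟨swRel_mem hg hv hx ?_ ?_ ?_, ?_⟩
      · intro h
        have := swPt_eq hpm h
        rw [swPt_eq hpm hadj.symm] at this
        exact hxu this.symm
      · intro y hy
        rw [← swPt_eq hpm hy]; exact hvx
      · intro y hy
        rw [← swPt_eq hpm hy, swPt_eq hpm hadj.symm]
        exact fun h => hux h.symm
      · rw [swRel_adj, Equiv.swap_apply_of_ne_of_ne huv (Ne.symm hxu), Equiv.swap_apply_left]
        intro h
        have := swPt_eq hpm h
        rw [swPt_eq hpm hadj] at this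
        exact hxv this.symm
    · rintro ⟨g, x⟩ hp ⟨g', x'⟩ hp' heq
      simp only [hA, F, coe_sigma, Set.mem_sigma_iff, mem_coe, mem_filter, mem_sdiff, mem_insert,
        mem_singleton, not_or] at hp hp'
      obtain ⟨⟨hg, hadj⟩, ⟨hx, hxu, hxv⟩, hux, hvx⟩ := hp
      obtain ⟨⟨hg', hadj'⟩, ⟨hx', hxu', hxv'⟩, hux', hvx'⟩ := hp'
      simp only at heq
      have e1 : (swRel v x g).Adj u x := by
        rw [swRel_adj, Equiv.swap_apply_of_ne_of_ne huv (Ne.symm hxu), Equiv.swap_apply_right]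
        exact hadj
      have e2 : (swRel v x' g').Adj u x' := by
        rw [swRel_adj, Equiv.swap_apply_of_ne_of_ne huv (Ne.symm hxu'), Equiv.swap_apply_right]
        exact hadj'
      have hpm := swRel_pm v x' (mem_swX.1 hg').1
      have hxx : x = x' := by
        rw [heq] at e1
        rw [← swPt_eq hpm e2, ← swPt_eq hpm e1]
      subst hxx
      have : g = g' := by rw [← swRel_swRel v x g, heq, swRel_swRel]
      rw [this]
  rw [card_sigma] at hinj
  have hsum : ∑ g ∈ A, (((swU M').card : ℝ) - 2 - 2 * D) ≤ ∑ g ∈ A, ((F g).card : ℝ) := by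
    refine sum_le_sum fun g hg => ?_
    have hpm := (mem_swX.1 (mem_filter.1 hg).1).1
    have := sw_good (M' := M') hpm {u, v} u v hD
    rw [card_pair huv] at this
    have h' : (((swU M').card : ℕ) : ℝ) ≤ ((F g).card + 2 + 2 * D : ℕ) := by exact_mod_cast this
    push_cast at h'
    linarith
  rw [sum_const, nsmul_eq_mul] at hsum
  have h1 : (∑ g ∈ A, ((F g).card : ℝ)) ≤ B.card := by exact_mod_cast hinj
  have h2 : (A.card : ℝ) + B.card = (swX H M').card := by exact_mod_cast hcard
  linarith

theorem sw_lower1 {H M' : SimpleGraph V} {u v : V}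
    (huv : u ≠ v) (hu : u ∈ swU M') (hv : v ∈ swU M') (hH : ¬ H.Adj u v) :
    (((swX H M').filter (fun g => ¬ g.Adj u v ∧ ¬ H.Adj (swPt g u) (swPt g v))).card : ℝ) ≤
    (((swU M').card : ℝ) - 2) * (((swX H M').filter (fun g => g.Adj u v)).card : ℝ) := by
  set A := (swX H M').filter (fun g => g.Adj u v) with hA
  set C := (swX H M').filter (fun g => ¬ g.Adj u v ∧ ¬ H.Adj (swPt g u) (swPt g v)) with hC
  have hinj : C.card ≤ (A ×ˢ (swU M' \ {u, v})).card := by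
    refine card_le_card_of_injOn (fun g => (swRel v (swPt g u) g, swPt g u)) ?_ ?_
    · intro g hp
      simp only [hC, coe_filter, Set.mem_ofPred_eq] at hp
      obtain ⟨hg, hadj, hxy⟩ := hp
      have hpm := (mem_swX.1 hg).1
      have hxu : swPt g u ≠ u := (swPt_adj hpm u).ne'
      have hxv : swPt g u ≠ v := fun h => hadj (h ▸ swPt_adj hpm u)
      simp only [hA, coe_product, Set.mem_prod, mem_coe, mem_filter, mem_sdiff, mem_insert,
        mem_singleton, not_or]
      refine ⟨⟨swRel_mem hg hv (swPt_mem_U hg hu) ?_ ?_ ?_, ?_⟩, swPt_mem_U hg hu, hxu, hxv⟩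
      · intro h
        have := swPt_eq hpm h.symm
        rw [swPt_pt hpm] at this
        exact huv this
      · intro y hy
        rw [← swPt_eq hpm hy, swPt_pt hpm]
        exact fun h => hH h.symm
      · intro y hy
        rw [← swPt_eq hpm hy]; exact hxy
      · rw [swRel_adj, Equiv.swap_apply_of_ne_of_ne huv (Ne.symm hxu), Equiv.swap_apply_left]
        exact swPt_adj hpm u
    · intro g _ g' _ heq
      simp only [Prod.mk.injEq] at heq
      rw [← swRel_swRel v (swPt g u) g, heq.1, heq.2, swRel_swRel]
  rw [card_product, card_sdiff_of_subset (by
    intro x hx; simp only [mem_insert, mem_singleton] at hx; rcases hx with rfl | rfl <;> assumption),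
    card_pair huv] at hinj
  have h2 : 2 ≤ (swU M').card := by
    rw [← card_pair huv]
    apply card_le_card
    intro x hx; simp only [mem_insert, mem_singleton] at hx; rcases hx with rfl | rfl <;> assumption
  have : (C.card : ℝ) ≤ (A.card * ((swU M').card - 2) : ℕ) := by exact_mod_cast hinj
  push_cast [Nat.cast_sub h2] at this
  linarith

theorem sw_lower2 {H M' : SimpleGraph V} {D : ℕ} (hD : ∀ w, (swN H w).card ≤ D) {u v : V}
    (huv : u ≠ v) (hu : u ∈ swU M') (hv : v ∈ swU M') :
    (((swU M').card : ℝ) - 4 - 2 * D) *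
    (((swX H M').filter (fun g => ¬ g.Adj u v ∧ H.Adj (swPt g u) (swPt g v))).card : ℝ) ≤
    D * ((swX H M').card : ℝ) := by
  set S := (swX H M').filter (fun g => ¬ g.Adj u v ∧ H.Adj (swPt g u) (swPt g v)) with hS
  let F : SimpleGraph V → Finset V := fun g => (swU M' \ {u, v, swPt g u, swPt g v}).filter
      (fun a => ¬ H.Adj v a ∧ ¬ H.Adj (swPt g v) (swPt g a))
  have key : ∀ g a, g ∈ S → a ∈ F g → swRel (swPt g v) a g ∈ swX H M' ∧
      (swRel (swPt g v) a g).Adj v a ∧ (swRel (swPt g v) a g).Adj u (swPt g u) := by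
    intro g a hg ha
    simp only [hS, F, mem_filter, mem_sdiff, mem_insert, mem_singleton, not_or] at hg ha
    obtain ⟨hg, hadj, hxy⟩ := hg
    obtain ⟨⟨haU, hau, hav, hax, hay⟩, hva, hya⟩ := ha
    have hpm := (mem_swX.1 hg).1
    have hvy : v ≠ swPt g v := (swPt_adj hpm v).ne
    have huy : u ≠ swPt g v := fun h => hadj (by
      have := swPt_adj hpm v
      rw [← h] at this
      exact this.symm)
    refine ⟨swRel_mem hg (swPt_mem_U hg hv) haU ?_ ?_ ?_, ?_, ?_⟩
    · intro h
      have := swPt_eq hpm h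
      rw [swPt_pt hpm] at this
      exact hav this.symm
    · intro z hz
      rw [← swPt_eq hpm hz]; exact hya
    · intro z hz
      rw [← swPt_eq hpm hz, swPt_pt hpm]
      exact fun h => hva h.symm
    · rw [swRel_adj, Equiv.swap_apply_of_ne_of_ne hvy (Ne.symm hav), Equiv.swap_apply_right]
      exact swPt_adj hpm v
    · rw [swRel_adj, Equiv.swap_apply_of_ne_of_ne huy (Ne.symm hau),
        Equiv.swap_apply_of_ne_of_ne hxy.ne (Ne.symm hax)]
      exact swPt_adj hpm u
  have hinj : (S.sigma F).card ≤ ((swX H M').sigma (fun g => swN H (swPt g u))).card := by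
    refine card_le_card_of_injOn
      (fun p => (⟨swRel (swPt p.1 v) p.2 p.1, swPt p.1 v⟩ : (_ : SimpleGraph V) × V)) ?_ ?_
    · rintro ⟨g, a⟩ hp
      simp only [coe_sigma, Set.mem_sigma_iff, mem_coe] at hp ⊢
      obtain ⟨k1, k2, k3⟩ := key g a hp.1 hp.2
      refine ⟨k1, ?_⟩
      rw [swPt_eq (mem_swX.1 k1).1 k3, mem_swN]
      exact (mem_filter.1 hp.1).2.2
    · rintro ⟨g, a⟩ hp ⟨g', a'⟩ hp' heq
      simp only [coe_sigma, Set.mem_sigma_iff, mem_coe] at hp hp'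
      obtain ⟨k1, k2, k3⟩ := key g a hp.1 hp.2
      obtain ⟨k1', k2', k3'⟩ := key g' a' hp'.1 hp'.2
      simp only [Sigma.mk.injEq, heq_eq_eq] at heq
      obtain ⟨e1, e2⟩ := heq
      have haa : a = a' := by
        rw [e1] at k2
        rw [← swPt_eq (mem_swX.1 k1').1 k2', ← swPt_eq (mem_swX.1 k1').1 k2]
      subst haa
      have : g = g' := by
        rw [← swRel_swRel (swPt g v) a g, e1, e2, swRel_swRel]
      rw [this]
  rw [card_sigma, card_sigma] at hinj
  have hsum : ∑ g ∈ S, (((swU M').card : ℝ) - 4 - 2 * D) ≤ ∑ g ∈ S, ((F g).card : ℝ) := by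
    refine sum_le_sum fun g hg => ?_
    have hpm := (mem_swX.1 (mem_filter.1 hg).1).1
    have := sw_good (M' := M') hpm {u, v, swPt g u, swPt g v} v (swPt g v) hD
    have h4 : ({u, v, swPt g u, swPt g v} : Finset V).card ≤ 4 := card_le_four
    have h' : (((swU M').card : ℕ) : ℝ) ≤ ((F g).card + 4 + 2 * D : ℕ) := by
      have hF : (F g).card = ((swU M' \ {u, v, swPt g u, swPt g v}).filter
        (fun a => ¬ H.Adj v a ∧ ¬ H.Adj (swPt g v) (swPt g a))).card := rfl
      exact_mod_cast (this.trans (by omega))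
    push_cast at h'
    linarith
  rw [sum_const, nsmul_eq_mul] at hsum
  have hsum2 : ∑ g ∈ swX H M', (swN H (swPt g u)).card ≤ (swX H M').card * D := by
    rw [← smul_eq_mul, ← sum_const]
    exact sum_le_sum fun g _ => hD _
  have h1 : (∑ g ∈ S, ((F g).card : ℝ)) ≤ ((swX H M').card * D : ℕ) := by
    exact_mod_cast hinj.trans hsum2
  push_cast at h1
  linarith

theorem sw_lower {H M' : SimpleGraph V} {D : ℕ} (hD : ∀ w, (swN H w).card ≤ D) {u v : V}
    (huv : u ≠ v) (hu : u ∈ swU M') (hv : v ∈ swU M') (hH : ¬ H.Adj u v)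
    (hm : (0 : ℝ) ≤ ((swU M').card : ℝ) - 4 - 2 * D) :
    (((swU M').card : ℝ) - 4 - 3 * D) * ((swX H M').card : ℝ) ≤
    ((((swU M').card : ℝ) - 1) * (((swU M').card : ℝ) - 4 - 2 * D)) *
      (((swX H M').filter (fun g => g.Adj u v)).card : ℝ) := by
  have h1 := sw_lower1 huv hu hv hH
  have h2 := sw_lower2 hD huv hu hv
  have c1 : ((swX H M').filter (fun g => g.Adj u v)).card +
    ((swX H M').filter (fun g => ¬ g.Adj u v)).card = (swX H M').card :=
    card_filter_add_card_filter_not _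
  have c2 : (((swX H M').filter (fun g => ¬ g.Adj u v)).filter
      (fun g => H.Adj (swPt g u) (swPt g v))).card +
    (((swX H M').filter (fun g => ¬ g.Adj u v)).filter
      (fun g => ¬ H.Adj (swPt g u) (swPt g v))).card =
      ((swX H M').filter (fun g => ¬ g.Adj u v)).card :=
    card_filter_add_card_filter_not _
  rw [filter_filter, filter_filter] at c2
  set a := ((swX H M').filter (fun g => g.Adj u v)).card
  set b := ((swX H M').filter (fun g => ¬ g.Adj u v)).card
  set s := ((swX H M').filter (fun g => ¬ g.Adj u v ∧ H.Adj (swPt g u) (swPt g v))).card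
  set c := ((swX H M').filter (fun g => ¬ g.Adj u v ∧ ¬ H.Adj (swPt g u) (swPt g v))).card
  have c1' : (a : ℝ) + b = (swX H M').card := by exact_mod_cast c1
  have c2' : (s : ℝ) + c = b := by exact_mod_cast c2
  have h3 := mul_le_mul_of_nonneg_left h1 hm
  nlinarith

theorem sw_bridge0 {d : ℕ} {β : Type} [Fintype β] (c : Fin d) (p q : (Fin d → β) → Prop) (a b : ℝ)
    (h : ∀ R : Fin d → β,
      a * ((univ.filter (fun g => p (Function.update R c g))).card : ℝ) ≤
      b * ((univ.filter (fun g => q (Function.update R c g))).card : ℝ)) :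
    a * ((univ.filter p).card : ℝ) ≤ b * ((univ.filter q).card : ℝ) := by
  have key : ∀ p : (Fin d → β) → Prop,
      (Fintype.card β : ℝ) * ((univ.filter p).card : ℝ) = ∑ R : Fin d → β,
        ((univ.filter (fun g => p (Function.update R c g))).card : ℝ) := by
    intro p
    let e := Equiv.funSplitAt c β
    have e1 : ((univ.filter p).card : ℝ) =
        ∑ x : β × ({j // j ≠ c} → β), if p (e.symm x) then (1 : ℝ) else 0 := by
      rw [← Fintype.sum_equiv e (fun M => if p M then (1 : ℝ) else 0) _ (by simp)]
      simp
    have hup : ∀ (y : β × ({j // j ≠ c} → β)) g,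
        Function.update (e.symm y) c g = e.symm (g, y.2) := by
      intro y g
      ext j
      by_cases hj : j = c
      · subst hj; simp [e, Equiv.funSplitAt, Equiv.piSplitAt]
      · simp [e, Equiv.funSplitAt, Equiv.piSplitAt, hj]
    rw [Fintype.sum_equiv e _ (fun y => ((univ.filter (fun g => p (e.symm (g, y.2)))).card : ℝ))
      (by
        intro R
        have := hup (e R)
        simp only [Equiv.symm_apply_apply] at this
        simp only [this])]
    rw [e1, Fintype.sum_prod_type, Fintype.sum_prod_type, sum_comm]
    simp
  by_cases hβ : Fintype.card β = 0
  · have hE : IsEmpty β := Fintype.card_eq_zero_iff.1 hβ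
    have : IsEmpty (Fin d → β) := ⟨fun f => hE.elim (f c)⟩
    simp
  · have hpos : (0 : ℝ) < Fintype.card β := by exact_mod_cast Nat.pos_of_ne_zero hβ
    refine le_of_mul_le_mul_left ?_ hpos
    calc _ = a * (Fintype.card β * ((univ.filter p).card : ℝ)) := by ring
      _ = ∑ R : Fin d → β, a * ((univ.filter (fun g => p (Function.update R c g))).card : ℝ) := by
        rw [key, mul_sum]
      _ ≤ ∑ R : Fin d → β, b * ((univ.filter (fun g => q (Function.update R c g))).card : ℝ) :=
        sum_le_sum fun R _ => h R
      _ = b * (Fintype.card β * ((univ.filter q).card : ℝ)) := by rw [key, mul_sum]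
      _ = _ := by ring

theorem sw_bridge {d : ℕ} {β : Type} [Fintype β] (c : Fin d) (p q : (Fin d → β) → Prop)
    [DecidablePred p] [DecidablePred q] (a b : ℝ)
    (h : ∀ R : Fin d → β, ∃ A B : Finset β, (∀ g, p (Function.update R c g) ↔ g ∈ A) ∧
      (∀ g, q (Function.update R c g) ↔ g ∈ B) ∧ a * (A.card : ℝ) ≤ b * (B.card : ℝ)) :
    a * ((univ.filter p).card : ℝ) ≤ b * ((univ.filter q).card : ℝ) := by
  have := sw_bridge0 c p q a b (fun R => by
    obtain ⟨A, B, hA, hB, hAB⟩ := h R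
    have e1 : univ.filter (fun g => p (Function.update R c g)) = A := by
      ext g; simp [hA]
    have e2 : univ.filter (fun g => q (Function.update R c g)) = B := by
      ext g; simp [hB]
    rw [← e1, ← e2] at hAB; convert hAB)
  convert this

end Switching
section Tuples
open Classical Finset

/-- Union of all colours except `c`. -/
def swH {n d : ℕ} (R : Fin d → SimpleGraph (Fin n)) (c : Fin d) : SimpleGraph (Fin n) where
  Adj x y := ∃ j, j ≠ c ∧ (R j).Adj x y
  symm := ⟨fun _ _ ⟨j, hj, h⟩ => ⟨j, hj, h.symm⟩⟩
  loopless := ⟨fun _ ⟨_, _, h⟩ => h.ne rfl⟩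

/-- The colours other than `c` are fine. -/
def swOK {n d : ℕ} (R : Fin d → SimpleGraph (Fin n)) (c : Fin d) : Prop :=
  (∀ j, j ≠ c → SwPM (R j)) ∧ ∀ i j, i ≠ c → j ≠ c → i ≠ j → Disjoint (R i) (R j)

theorem sw_pm_iff {n : ℕ} (g : SimpleGraph (Fin n)) :
    (∀ v, Nat.card (g.neighborSet v) = 1) ↔ SwPM g := by
  refine forall_congr' fun v => ?_
  rw [Nat.card_eq_one_iff_exists]
  constructor
  · rintro ⟨⟨w, hw⟩, h⟩
    exact ⟨w, hw, fun x hx => congrArg Subtype.val (h ⟨x, hx⟩)⟩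
  · rintro ⟨w, hw, h⟩
    exact ⟨⟨w, hw⟩, fun y => Subtype.ext (h _ y.2)⟩

theorem sw_tuple_iff {n d : ℕ} (R : Fin d → SimpleGraph (Fin n)) (c : Fin d)
    (g : SimpleGraph (Fin n)) :
    IsPMTuple (Function.update R c g) ↔ swOK R c ∧ SwPM g ∧ Disjoint g (swH R c) := by
  simp only [IsPMTuple, sw_pm_iff, swOK]
  have hd : Disjoint g (swH R c) ↔ ∀ j, j ≠ c → Disjoint g (R j) := by
    simp only [SimpleGraph.disjoint_left, swH]
    constructor
    · intro h j hj x y hxy hR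
      exact h x y hxy ⟨j, hj, hR⟩
    · rintro h x y hxy ⟨j, hj, hR⟩
      exact h j hj x y hxy hR
  rw [hd]
  constructor
  · rintro ⟨h1, h2⟩
    refine ⟨⟨fun j hj => ?_, fun i j hi hj hij => ?_⟩, ?_, fun j hj => ?_⟩
    · simpa [hj] using h1 j
    · simpa [hi, hj] using h2 i j hij
    · simpa using h1 c
    · simpa [hj] using h2 c j hj.symm
  · rintro ⟨⟨h1, h2⟩, h3, h4⟩
    refine ⟨fun j => ?_, fun i j hij => ?_⟩
    · by_cases hj : j = c
      · subst hj; simpa using h3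
      · simpa [hj] using h1 j hj
    · by_cases hi : i = c
      · subst hi
        simpa [hij.symm] using h4 j hij.symm
      · by_cases hj : j = c
        · subst hj
          simpa [hij] using (h4 i hij).symm
        · simpa [hi, hj] using h2 i j hi hj hij

theorem swH_deg {n d : ℕ} {R : Fin d → SimpleGraph (Fin n)} {c : Fin d} (h : swOK R c)
    (w : Fin n) : (swN (swH R c) w).card ≤ d := by
  have hsub : swN (swH R c) w ⊆ (univ : Finset (Fin d)).image (fun j => swPt (R j) w) := by
    intro x hx
    rw [mem_swN] at hx
    obtain ⟨j, hj, hx⟩ := hx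
    exact mem_image.2 ⟨j, mem_univ _, swPt_eq (h.1 j hj) hx⟩
  refine (card_le_card hsub).trans (card_image_le.trans ?_)
  simp

theorem tup_upper {n d : ℕ} (c : Fin d) (Q Q' : (Fin d → SimpleGraph (Fin n)) → Prop)
    (L : SimpleGraph (Fin n)) (hQ : ∀ R g, Q (Function.update R c g) ↔ Q' R ∧ L ≤ g)
    {u v : Fin n} (huv : u ≠ v) (hu : u ∈ swU L) (hv : v ∈ swU L) :
    (((swU L).card : ℝ) - 1 - 2 * d) *
      ((univ.filter (fun M => IsPMTuple M ∧ Q M ∧ (M c).Adj u v)).card : ℝ) ≤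
      1 * ((univ.filter (fun M : Fin d → SimpleGraph (Fin n) => IsPMTuple M ∧ Q M)).card : ℝ) := by
  refine sw_bridge c _ _ _ _ fun R => ?_
  by_cases hR : swOK R c ∧ Q' R
  · have h := sw_upper (H := swH R c) (swH_deg hR.1) huv hu hv
    refine ⟨_, _, ?_, ?_, (one_mul ((swX (swH R c) L).card : ℝ)).symm ▸ h⟩
    · intro g
      simp only [mem_filter, mem_univ, true_and, swX, sw_tuple_iff, hQ, Function.update_self]
      tauto
    · intro g
      simp only [mem_filter, mem_univ, true_and, swX, sw_tuple_iff, hQ]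
      tauto
  · refine ⟨∅, univ.filter (fun g => IsPMTuple (Function.update R c g) ∧
      Q (Function.update R c g)), ?_, fun g => by simp, by simp⟩
    intro g
    simp only [sw_tuple_iff, hQ, notMem_empty, iff_false]
    tauto

theorem tup_lower {n d : ℕ} (c : Fin d) (Q Q' : (Fin d → SimpleGraph (Fin n)) → Prop)
    (L : SimpleGraph (Fin n)) (hQ : ∀ R g, Q (Function.update R c g) ↔ Q' R ∧ L ≤ g)
    {u v : Fin n} (huv : u ≠ v) (hu : u ∈ swU L) (hv : v ∈ swU L)
    (hm : (0 : ℝ) ≤ ((swU L).card : ℝ) - 4 - 2 * d) :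
    (((swU L).card : ℝ) - 4 - 3 * d) *
      ((univ.filter (fun M => IsPMTuple M ∧ Q M ∧ ∀ j, j ≠ c → ¬ (M j).Adj u v)).card : ℝ) ≤
      ((((swU L).card : ℝ) - 1) * (((swU L).card : ℝ) - 4 - 2 * d)) *
      ((univ.filter (fun M : Fin d → SimpleGraph (Fin n) =>
        IsPMTuple M ∧ Q M ∧ (M c).Adj u v)).card : ℝ) := by
  refine sw_bridge c _ _ _ _ fun R => ?_
  by_cases hR : (swOK R c ∧ Q' R) ∧ ¬ (swH R c).Adj u v
  · have h := sw_lower (H := swH R c) (swH_deg hR.1.1) huv hu hv hR.2 hm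
    have hR2 : ∀ g j, j ≠ c → ¬ (Function.update R c g j).Adj u v := by
      intro g j hj h
      rw [Function.update_of_ne hj] at h
      exact hR.2 ⟨j, hj, h⟩
    refine ⟨_, _, ?_, ?_, h⟩
    · intro g
      have := hR2 g
      simp only [mem_filter, mem_univ, true_and, swX, sw_tuple_iff, hQ]
      tauto
    · intro g
      simp only [mem_filter, mem_univ, true_and, swX, sw_tuple_iff, hQ, Function.update_self]
      tauto
  · refine ⟨∅, univ.filter (fun g => IsPMTuple (Function.update R c g) ∧
      Q (Function.update R c g) ∧ (Function.update R c g c).Adj u v), ?_, fun g => by simp, ?_⟩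
    · intro g
      simp only [sw_tuple_iff, hQ, notMem_empty, iff_false]
      rintro ⟨h1, h2, h3⟩
      refine hR ⟨⟨h1.1, h2.1⟩, ?_⟩
      rintro ⟨j, hj, h⟩
      exact h3 j hj (by rw [Function.update_of_ne hj]; exact h)
    · have : (0 : ℝ) ≤ ((swU L).card : ℝ) - 1 := by
        have : (0 : ℝ) ≤ d := by positivity
        linarith
      simp only [card_empty, Nat.cast_zero, mul_zero]
      positivity

theorem sw_U_card {n : ℕ} (L : SimpleGraph (Fin n))
    (hL : ∀ v w x : Fin n, L.Adj v w → L.Adj v x → w = x) :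
    (swU L).card + 2 * Nat.card L.edgeSet = n := by
  have h1 := L.sum_degrees_eq_twice_card_edges
  have h2 : ∀ v, L.degree v = if (∀ x, ¬ L.Adj v x) then 0 else 1 := by
    intro v
    split_ifs with h
    · rw [SimpleGraph.degree, card_eq_zero]
      ext x; simpa using h x
    · push Not at h
      obtain ⟨x, hx⟩ := h
      rw [SimpleGraph.degree, card_eq_one]
      refine ⟨x, ?_⟩
      ext y
      simp only [SimpleGraph.mem_neighborFinset, mem_singleton]
      exact ⟨fun hy => hL _ _ _ hy hx, fun hy => hy ▸ hx⟩
  rw [sum_congr rfl (fun v _ => h2 v)] at h1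
  have h3 : (∑ v : Fin n, if (∀ x, ¬ L.Adj v x) then 0 else 1) =
      (univ.filter (fun v => ¬ ∀ x, ¬ L.Adj v x)).card := by
    rw [card_filter]
    exact sum_congr rfl fun v _ => by split_ifs <;> simp_all
  rw [h3] at h1
  have h4 := card_filter_add_card_filter_not (s := (univ : Finset (Fin n)))
    (fun v => ∀ x, ¬ L.Adj v x)
  have h5 : Nat.card L.edgeSet = L.edgeFinset.card := by
    rw [Nat.card_eq_fintype_card, SimpleGraph.edgeFinset_card]
  rw [h5, ← h1, swU]
  rw [card_univ, Fintype.card_fin] at h4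
  convert h4

theorem sw_arith (n d m A T T' : ℝ) (hd : 4 ≤ d) (hn : 16 * d ≤ n) (hn64 : 64 ≤ n)
    (hm : n / 2 ≤ m) (hmn : m ≤ n) (hT : 0 < T) (hA : 0 ≤ A)
    (h1 : (m - 1 - 2 * d) * A ≤ T)
    (h2 : (m - 4 - 3 * d) * T' ≤ ((m - 1) * (m - 4 - 2 * d)) * A)
    (h3 : (n - 1 - 2 * d) * (T - T') ≤ d * T) :
    |A / T - 1 / m| ≤ (16 * d / n) / m := by
  have hm0 : 0 < m := by linarith
  have hn0 : 0 < n := by linarith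
  have ha : n / 4 ≤ m - 4 - 2 * d := by linarith
  set p := A / T with hp
  have hAp : A = p * T := by rw [hp]; field_simp
  have hp0 : 0 ≤ p := by positivity
  have hpu : (m - 1 - 2 * d) * p ≤ 1 := by
    rw [hAp] at h1
    refine le_of_mul_le_mul_right ?_ hT
    linarith
  set q := T' / T with hq
  have hTq : T' = q * T := by rw [hq]; field_simp
  have h2' : (m - 4 - 3 * d) * q ≤ ((m - 1) * (m - 4 - 2 * d)) * p := by
    rw [hAp, hTq] at h2
    refine le_of_mul_le_mul_right ?_ hT
    linarith
  have h3' : (n - 1 - 2 * d) * (1 - q) ≤ d := by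
    rw [hTq] at h3
    refine le_of_mul_le_mul_right ?_ hT
    linarith
  -- relative error
  have key : |m * p - 1| ≤ 16 * d / n := by
    have hx : n * (1 - q) ≤ 4 * d := by
      by_cases h : 1 - q ≤ 0
      · nlinarith
      · nlinarith
    have hp4 : n / 4 * p ≤ 1 := by nlinarith
    have hup : m * p - 1 ≤ (1 + 2 * d) * p := by linarith
    have hdp : n * ((1 + 2 * d) * p) ≤ 16 * d := by nlinarith
    set a := m - 4 - 2 * d with haa
    have hlow : (a - d) * q ≤ m * a * p := by
      have : m - 4 - 3 * d = a - d := by rw [haa]; ring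
      rw [this] at h2'
      nlinarith [mul_nonneg (by linarith : 0 ≤ a) hp0]
    have hq1 : 1 - 4 * d / n ≤ q := by
      have : 1 - q ≤ 4 * d / n := by rw [le_div_iff₀ hn0]; linarith
      linarith
    have hda : d / a ≤ 4 * d / n := by
      rw [div_le_div_iff₀ (by linarith) hn0]
      nlinarith
    have ha0 : 0 < a := by linarith
    have hlow2 : (1 - d / a) * q ≤ m * p := by
      have e : (1 - d / a) * q = ((a - d) * q) / a := by field_simp
      rw [e, div_le_iff₀ ha0]
      linarith
    have hsm : 4 * d / n ≤ 1 := by rw [div_le_one hn0]; linarith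
    have hsm0 : 0 ≤ 4 * d / n := by positivity
    have hda0 : 0 ≤ d / a := by positivity
    have hq2 : (1 - 4 * d / n) * (1 - 4 * d / n) ≤ m * p := by
      refine le_trans ?_ hlow2
      exact mul_le_mul (by linarith) hq1 (by linarith) (by linarith)
    rw [abs_le]
    have e16 : 16 * d / n = 4 * (4 * d / n) := by ring
    constructor
    · rw [e16]; nlinarith
    · refine hup.trans ?_
      rw [le_div_iff₀ hn0]; linarith
  have e : p - 1 / m = (m * p - 1) / m := by field_simp
  rw [e, abs_div, abs_of_pos hm0]
  exact div_le_div_of_nonneg_right key hm0.le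

end Tuples
/-- There is a sequence `ε_n → 0` with the following property.  Sample
`(M_1,…,M_d) = G''(n,d)` (even `n`, `4 ≤ d ≤ n-1`, `d³ ≤ n`), fix `i ∈ [k]` with
`k = ⌊d/4⌋` (here 0-indexed: `i < d/4`, the matching colour being index `4i+3`), fix
perfect matchings `N c` for all fixed colours `c`, fix `t ∈ [1, n/4]` and a matching `M'`
with `t` edges, all pairwise edge-disjoint, such that the conditioning event
`E = {M_c = N_c for all fixed colours c, and M' ⊆ M_{4i}}` has positive probability.
Then for all vertices `u ≠ v` not covered by `M'` with `uv` not an edge of `M'` nor of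
any `N c`, the conditional probability that `uv ∈ M_{4i}` is `(1 + O(ε_n))/(n-2t)`. -/
theorem stmt9 :
    ∃ ε : ℕ → ℝ, Filter.Tendsto ε Filter.atTop (nhds 0) ∧
      ∀ n d : ℕ, Even n → 4 ≤ d → d ≤ n - 1 → d ^ 3 ≤ n →
      ∀ i : ℕ, ∀ hi : i < d / 4,
      ∀ N : Fin d → SimpleGraph (Fin n),
        (∀ c : Fin d, FixedColour d c → ∀ v, Nat.card ((N c).neighborSet v) = 1) →
        (∀ c c' : Fin d, FixedColour d c → FixedColour d c' → c ≠ c' →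
          Disjoint (N c) (N c')) →
      ∀ t : ℕ, 1 ≤ t → t ≤ n / 4 →
      ∀ M' : SimpleGraph (Fin n),
        (∀ v w x : Fin n, M'.Adj v w → M'.Adj v x → w = x) →
        Nat.card M'.edgeSet = t →
        (∀ c : Fin d, FixedColour d c → Disjoint (N c) M') →
        (∃ M : Fin d → SimpleGraph (Fin n), IsPMTuple M ∧
          ((∀ c, FixedColour d c → M c = N c) ∧ M' ≤ M ⟨4 * i + 3, by omega⟩)) →
      ∀ u v : Fin n, u ≠ v →
        (∀ w, ¬ M'.Adj u w) → (∀ w, ¬ M'.Adj v w) →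
        (∀ c : Fin d, FixedColour d c → ¬ (N c).Adj u v) →
        |tupleCondProb n d
            (fun M => (∀ c, FixedColour d c → M c = N c) ∧ M' ≤ M ⟨4 * i + 3, by omega⟩)
            (fun M => (M ⟨4 * i + 3, by omega⟩).Adj u v) -
          1 / ((n : ℝ) - 2 * t)| ≤ ε n / ((n : ℝ) - 2 * t) := by
  classical
  refine ⟨fun n => 8 / Real.sqrt n, ?_, ?_⟩
  · exact Filter.Tendsto.div_atTop tendsto_const_nhds
      (Real.tendsto_sqrt_atTop.comp tendsto_natCast_atTop_atTop)
  intro n d _ hd4 _ hd3 i hi N _ _ t _ ht M' hM' hcard _ hE u v huv hu hv hN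
  set c0 : Fin d := ⟨4 * i + 3, by omega⟩ with hc0
  have hc0F : ¬ FixedColour d c0 := by
    intro h
    have := h.2
    simp only [hc0] at this
    omega
  set Q : (Fin d → SimpleGraph (Fin n)) → Prop :=
    fun M => (∀ c, FixedColour d c → M c = N c) ∧ M' ≤ M c0 with hQdef
  have hfix : ∀ c, ¬ FixedColour d c → ∀ (R : Fin d → SimpleGraph (Fin n)) g,
      (∀ c', FixedColour d c' → Function.update R c g c' = N c') ↔
      (∀ c', FixedColour d c' → R c' = N c') := by
    intro c hc R g
    refine forall_congr' fun c' => imp_congr_right fun hc' => ?_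
    rw [Function.update_of_ne (fun h : c' = c => hc (h ▸ hc'))]
  have hQ0 : ∀ R g, Q (Function.update R c0 g) ↔
      (∀ c', FixedColour d c' → R c' = N c') ∧ M' ≤ g := by
    intro R g
    simp only [hQdef, hfix c0 hc0F, Function.update_self]
  have huU : u ∈ swU M' := mem_swU.2 hu
  have hvU : v ∈ swU M' := mem_swU.2 hv
  have hm := sw_U_card M' hM'
  rw [hcard] at hm
  have hmR : ((swU M').card : ℝ) = (n : ℝ) - 2 * t := by
    have : ((swU M').card : ℝ) + 2 * t = n := by exact_mod_cast hm
    linarith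
  have hd4R : (4 : ℝ) ≤ d := by exact_mod_cast hd4
  have hd3R : (d : ℝ) ^ 3 ≤ n := by exact_mod_cast hd3
  have hd2R : 4 * (d : ℝ) ^ 2 ≤ n := by nlinarith [sq_nonneg (d : ℝ)]
  have hn16 : 16 * (d : ℝ) ≤ n := by nlinarith
  have hn64 : (64 : ℝ) ≤ n := by linarith
  have htR : (4 : ℝ) * t ≤ n := by
    have : 4 * t ≤ n := by omega
    exact_mod_cast this
  set TT := Finset.univ.filter (fun M : Fin d → SimpleGraph (Fin n) => IsPMTuple M ∧ Q M) with hTT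
  set AA := Finset.univ.filter (fun M : Fin d → SimpleGraph (Fin n) =>
    IsPMTuple M ∧ Q M ∧ (M c0).Adj u v) with hAA
  set TT' := Finset.univ.filter (fun M : Fin d → SimpleGraph (Fin n) =>
    IsPMTuple M ∧ Q M ∧ ∀ j, j ≠ c0 → ¬ (M j).Adj u v) with hTT'
  have h1 := tup_upper c0 Q _ M' hQ0 huv huU hvU
  have h2 := tup_lower c0 Q _ M' hQ0 huv huU hvU (by rw [hmR]; linarith)
  have hTpos : 0 < TT.card := by
    obtain ⟨M, hM1, hM2⟩ := hE
    exact Finset.card_pos.2 ⟨M, by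
      simp only [hTT, Finset.mem_filter, Finset.mem_univ, true_and]; exact ⟨hM1, hM2⟩⟩
  -- other colours rarely contain `uv`
  let W : Fin d → Finset (Fin d → SimpleGraph (Fin n)) := fun j =>
    if j = c0 then ∅ else Finset.univ.filter (fun M => IsPMTuple M ∧ Q M ∧ (M j).Adj u v)
  have hW : ∀ j, ((n : ℝ) - 1 - 2 * d) * ((W j).card : ℝ) ≤ (TT.card : ℝ) := by
    intro j
    by_cases hj : j = c0
    · simp [W, hj]
    by_cases hjF : FixedColour d j
    · have : W j = ∅ := by
        ext M
        simp only [W, if_neg hj, Finset.mem_filter, Finset.mem_univ, true_and,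
          Finset.notMem_empty, iff_false]
        rintro ⟨-, hq, hadj⟩
        rw [hq.1 j hjF] at hadj
        exact hN j hjF hadj
      simp [this]
    · have hQj : ∀ R g, Q (Function.update R j g) ↔ Q R ∧ (⊥ : SimpleGraph (Fin n)) ≤ g := by
        intro R g
        simp only [hQdef, hfix j hjF, Function.update_of_ne (Ne.symm hj), bot_le, and_true]
      have h := tup_upper j Q _ ⊥ hQj huv (by simp [mem_swU]) (by simp [mem_swU])
      have hb : (swU (⊥ : SimpleGraph (Fin n))).card = n := by
        simp [swU]
      rw [hb, one_mul] at h
      simp only [W, if_neg hj]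
      convert h
  have h3 : ((n : ℝ) - 1 - 2 * d) * ((TT.card : ℝ) - TT'.card) ≤ d * TT.card := by
    have hsub : TT ⊆ TT' ∪ Finset.univ.biUnion W := by
      intro M hM
      simp only [hTT, Finset.mem_filter, Finset.mem_univ, true_and] at hM
      by_cases h : ∀ j, j ≠ c0 → ¬ (M j).Adj u v
      · refine Finset.mem_union_left _ ?_
        simp only [hTT', Finset.mem_filter, Finset.mem_univ, true_and]
        exact ⟨hM.1, hM.2, h⟩
      · push Not at h
        obtain ⟨j, hj, hadj⟩ := h
        refine Finset.mem_union_right _ (Finset.mem_biUnion.2 ⟨j, Finset.mem_univ _, ?_⟩)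
        simp only [W, if_neg hj, Finset.mem_filter, Finset.mem_univ, true_and]
        exact ⟨hM.1, hM.2, hadj⟩
    have hc : TT.card ≤ TT'.card + ∑ j, (W j).card :=
      (Finset.card_le_card hsub).trans ((Finset.card_union_le _ _).trans
        (Nat.add_le_add_left Finset.card_biUnion_le _))
    have hcR : (TT.card : ℝ) - TT'.card ≤ ∑ j, ((W j).card : ℝ) := by
      have : (TT.card : ℝ) ≤ TT'.card + ∑ j, ((W j).card : ℝ) := by exact_mod_cast hc
      linarith
    calc _ ≤ ((n : ℝ) - 1 - 2 * d) * ∑ j, ((W j).card : ℝ) :=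
          mul_le_mul_of_nonneg_left hcR (by linarith)
      _ = ∑ j, ((n : ℝ) - 1 - 2 * d) * ((W j).card : ℝ) := Finset.mul_sum _ _ _
      _ ≤ ∑ _j : Fin d, (TT.card : ℝ) := Finset.sum_le_sum fun j _ => hW j
      _ = _ := by simp
  rw [hmR] at h1 h2
  rw [one_mul] at h1
  have hfinal := sw_arith n d ((n : ℝ) - 2 * t) AA.card TT.card TT'.card hd4R hn16 hn64
    (by linarith) (by
      have : (0 : ℝ) ≤ t := by positivity
      linarith) (by exact_mod_cast hTpos) (by positivity)
    (by convert h1) (by convert h2) h3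
  have hprob : tupleCondProb n d Q (fun M => (M c0).Adj u v) = (AA.card : ℝ) / TT.card := by
    unfold tupleCondProb
    congr!
  rw [hprob]
  refine hfinal.trans (div_le_div_of_nonneg_right ?_ (by linarith))
  have hs : 0 < Real.sqrt n := Real.sqrt_pos.2 (by linarith)
  have hss : Real.sqrt n * Real.sqrt n = n := Real.mul_self_sqrt (by linarith)
  have hds : 2 * (d : ℝ) ≤ Real.sqrt n := Real.le_sqrt_of_sq_le (by nlinarith)
  rw [div_le_div_iff₀ (by linarith) hs]
  nlinarith
end
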